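/- arXiv:2005.07113 — 10 statements merged into one kernel-verified Lean document; each statement's English description precedes it below -/
import Mathlib

section
/- Let F be a field, C an [n,k] linear code over F, N ≥ n an integer, and S = {s_0 < s_1 < ⋯ < s_{n−1}} ⊆ {0,…,N−1} a placement set with s_0 = 0 and s_{n−1} = N−1, and let a ≤ b ≤ τ be positive integers. Then the packet-level code SDE(C,S) is an (a,b,τ) streaming code if and only if both of the following hold: (1) random erasure recovery: for every i ∈ {0,…,n−1} and every A ⊆ {i,…,r_i} with i ∈ A and |A| ≤ a, any two codewords c, c′ ∈ C satisfying c_j = c′_j for all j < i and for all j ∈ {i,…,r_i} \ A also satisfy c_i = c′_i; and (2) burst erasure recovery: for every i ∈ {0,…,n−1} and every B ⊆ {s_i,…,min(s_i+b−1, N−1)} with s_i ∈ B, any two codewords c, c′ ∈ C satisfying c_j = c′_j for all j < i and for all j ∈ {i,…,r_i} \ f_S(B) also satisfy c_i = c′_i. -/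
/-- Necessary and sufficient conditions for SDE(C,S) to be an
(a,b,τ) streaming code. -/
theorem sde_streaming_code_iff
    (F : Type*) [Field F] (n k N a b τ : ℕ)
    (hn : 0 < n) (hnN : n ≤ N)
    (ha : 0 < a) (hab : a ≤ b) (hbτ : b ≤ τ)
    (C : Submodule F (Fin n → F)) (hk : Module.finrank F C = k)
    (σ : Fin n → ℕ) (hσmono : StrictMono σ)
    (hσrange : ∀ i, σ i ≤ N - 1)
    (hσ0 : σ ⟨0, hn⟩ = 0) (hσlast : σ ⟨n - 1, by omega⟩ = N - 1)
    (fS : ℕ → Fin n)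
    (hfS : ∀ j : ℕ, σ (fS j) ≤ j ∧ ∀ i : Fin n, σ i ≤ j → i ≤ fS j)
    (r : Fin n → Fin n)
    (hr : ∀ i, r i = fS (min (σ i + τ) (N - 1))) :
    -- SDE(C,S) is an (a,b,τ) streaming code
    (∀ (t : ℤ) (E : Finset ℤ), (↑E ⊆ Set.Icc t (t + (τ : ℤ))) → t ∈ E →
        (E.card ≤ a ∨ ∀ e ∈ E, e ≤ t + (b : ℤ) - 1) →
        ∀ x y : ℤ → Fin n → F,
          (∀ s : ℤ, (fun i => x (s + (σ i : ℤ)) i) ∈ C) →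
          (∀ s : ℤ, (fun i => y (s + (σ i : ℤ)) i) ∈ C) →
          (∀ t' : ℤ, t' < t → x t' = y t') →
          (∀ t' : ℤ, t' ∈ Set.Icc t (t + (τ : ℤ)) → t' ∉ E → x t' = y t') →
          x t = y t)
    ↔
    -- (1) random erasure recovery
    ((∀ (i : Fin n) (A : Finset (Fin n)),
        A ⊆ Finset.Icc i (r i) → i ∈ A → A.card ≤ a →
        ∀ c ∈ C, ∀ c' ∈ C,
          (∀ j : Fin n, j < i → c j = c' j) →
          (∀ j ∈ Finset.Icc i (r i) \ A, c j = c' j) →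
          c i = c' i)
     ∧
    -- (2) burst erasure recovery
     (∀ (i : Fin n) (B : Finset ℕ),
        B ⊆ Finset.Icc (σ i) (min (σ i + b - 1) (N - 1)) → σ i ∈ B →
        ∀ c ∈ C, ∀ c' ∈ C,
          (∀ j : Fin n, j < i → c j = c' j) →
          (∀ j ∈ Finset.Icc i (r i) \ (B.image fS), c j = c' j) →
          c i = c' i)) := by
  have hfσ : ∀ i, fS (σ i) = i := fun i =>
    le_antisymm (hσmono.le_iff_le.1 (hfS (σ i)).1) ((hfS (σ i)).2 i le_rfl)
  have hmem : ∀ i j, j ≤ r i ↔ σ j ≤ σ i + τ := by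
    intro i j
    rw [hr]
    constructor
    · intro h
      exact ((hσmono.monotone h).trans (hfS _).1).trans (min_le_left _ _)
    · intro h
      exact (hfS _).2 j (le_min h (hσrange j))
  constructor
  · intro H
    have key : ∀ (i : Fin n) (A : Finset (Fin n)), A ⊆ Finset.Icc i (r i) → i ∈ A →
        (A.card ≤ a ∨ ∀ j ∈ A, σ j + 1 ≤ σ i + b) →
        ∀ c ∈ C, ∀ c' ∈ C, (∀ j : Fin n, j < i → c j = c' j) →
          (∀ j ∈ Finset.Icc i (r i) \ A, c j = c' j) → c i = c' i := by
      intro i A hA hiA hAab c hc c' hc' hlt hin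
      have hstream : ∀ d ∈ C, ∀ s : ℤ, (fun j : Fin n =>
          (if s + (σ j : ℤ) = (σ j : ℤ) then d j else 0)) ∈ C := by
        intro d hd s
        by_cases hs : s = 0
        · simpa [hs] using hd
        · simp only [add_eq_right, hs, if_false]
          exact C.zero_mem
      have h := H (σ i) (A.image fun j => (σ j : ℤ)) ?_ ?_ ?_
        (fun t j => if t = (σ j : ℤ) then c j else 0)
        (fun t j => if t = (σ j : ℤ) then c' j else 0)
        (hstream c hc) (hstream c' hc') ?_ ?_
      · simpa using congrFun h i
      · intro e he
        simp only [Finset.coe_image, Set.mem_image, Finset.mem_coe] at he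
        obtain ⟨j, hj, rfl⟩ := he
        have h1 := Finset.mem_Icc.1 (hA hj)
        have h2 := hσmono.monotone h1.1
        have h3 := (hmem i j).1 h1.2
        constructor <;> push_cast <;> omega
      · exact Finset.mem_image_of_mem _ hiA
      · rcases hAab with h | h
        · exact Or.inl (Finset.card_image_le.trans h)
        · right
          intro e he
          obtain ⟨j, hj, rfl⟩ := Finset.mem_image.1 he
          have := h j hj
          omega
      · intro t' ht'
        funext j
        by_cases hj : t' = (σ j : ℤ)
        · subst hj
          simpa using hlt j (hσmono.lt_iff_lt.1 (by exact_mod_cast ht'))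
        · simp [hj]
      · intro t' ht' hE
        funext j
        by_cases hj : t' = (σ j : ℤ)
        · subst hj
          have h1 : i ≤ j := hσmono.le_iff_le.1 (by exact_mod_cast ht'.1)
          have h2 : j ≤ r i := (hmem i j).2 (by exact_mod_cast ht'.2)
          have h3 : j ∉ A := fun h => hE (Finset.mem_image_of_mem _ h)
          simpa using hin j (by simp [h1, h2, h3])
        · simp [hj]
    constructor
    · intro i A hA hiA hcard
      exact key i A hA hiA (Or.inl hcard)
    · intro i B hB hiB
      have hb : ∀ m ∈ B, σ i ≤ m ∧ m + 1 ≤ σ i + b := by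
        intro m hm
        have := Finset.mem_Icc.1 (hB hm)
        omega
      refine key i (B.image fS) ?_ ?_ (Or.inr ?_)
      · intro j hj
        obtain ⟨m, hm, rfl⟩ := Finset.mem_image.1 hj
        have h1 := hb m hm
        have h2 := (hfS m).1
        exact Finset.mem_Icc.2 ⟨(hfS m).2 i h1.1, (hmem i _).2 (by omega)⟩
      · exact Finset.mem_image.2 ⟨σ i, hiB, hfσ i⟩
      · intro j hj
        obtain ⟨m, hm, rfl⟩ := Finset.mem_image.1 hj
        have h1 := hb m hm
        have h2 := (hfS m).1
        omega
  · rintro ⟨H1, H2⟩ t E hE htE hab' x y hx hy hpast hwin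
    funext i
    classical
    set A : Finset (Fin n) :=
      (Finset.Icc i (r i)).filter (fun j => t - (σ i : ℤ) + (σ j : ℤ) ∈ E) with hAdef
    have hA : A ⊆ Finset.Icc i (r i) := Finset.filter_subset _ _
    have hiA : i ∈ A := by
      have : i ≤ r i := (hmem i i).2 (by omega)
      simp [hAdef, this, htE]
    have hlt : ∀ j : Fin n, j < i →
        x (t - (σ i : ℤ) + (σ j : ℤ)) j = y (t - (σ i : ℤ) + (σ j : ℤ)) j := by
      intro j hj
      have := hσmono hj
      rw [hpast _ (by omega)]
    have hin : ∀ j ∈ Finset.Icc i (r i) \ A,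
        x (t - (σ i : ℤ) + (σ j : ℤ)) j = y (t - (σ i : ℤ) + (σ j : ℤ)) j := by
      intro j hj
      obtain ⟨h1, h2⟩ := Finset.mem_sdiff.1 hj
      have h3 : t - (σ i : ℤ) + (σ j : ℤ) ∉ E := fun h => h2 (Finset.mem_filter.2 ⟨h1, h⟩)
      have h4 := Finset.mem_Icc.1 h1
      have h5 := hσmono.monotone h4.1
      have h6 := (hmem i j).1 h4.2
      rw [hwin _ ⟨by omega, by omega⟩ h3]
    have hgoal : x (t - (σ i : ℤ) + (σ i : ℤ)) i = y (t - (σ i : ℤ) + (σ i : ℤ)) i := by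
      rcases hab' with h | h
      · refine H1 i A hA hiA ?_ (fun j => x (t - (σ i : ℤ) + (σ j : ℤ)) j) (hx (t - σ i))
          (fun j => y (t - (σ i : ℤ) + (σ j : ℤ)) j) (hy (t - σ i)) hlt hin
        refine le_trans (Finset.card_le_card_of_injOn
          (fun j => t - (σ i : ℤ) + (σ j : ℤ)) ?_ ?_) h
        · intro j hj
          exact (Finset.mem_filter.1 hj).2
        · intro j _ j' _ hjj
          apply hσmono.injective
          simpa using hjj
      · refine H2 i (A.image σ) ?_ (Finset.mem_image_of_mem _ hiA)
          (fun j => x (t - (σ i : ℤ) + (σ j : ℤ)) j) (hx (t - σ i))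
          (fun j => y (t - (σ i : ℤ) + (σ j : ℤ)) j) (hy (t - σ i)) hlt ?_
        · intro m hm
          obtain ⟨j, hj, rfl⟩ := Finset.mem_image.1 hm
          have h1 := h _ (Finset.mem_filter.1 hj).2
          have h2 := hσmono.monotone (Finset.mem_Icc.1 (hA hj)).1
          have h3 := hσrange j
          exact Finset.mem_Icc.2 ⟨h2, le_min (by omega) h3⟩
        · have : (A.image σ).image fS = A := by
            rw [Finset.image_image]
            have : fS ∘ σ = id := funext hfσ
            rw [this, Finset.image_id]
          rw [this]
          exact hin
    simpa using hgoal
end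

section
/- Let Z = (z_{ij}) be a k×n matrix of rank k over a field F, with 1 ≤ k ≤ n, whose row space is an [n,k] MDS code, i.e., every nonzero vector in the row space of Z has Hamming weight at least n−k+1. Suppose z_{ij} = 0 whenever j ≡ i+s (mod n) for some s ∈ {1,…,k−1}. Then z_{ij} ≠ 0 for every pair (i,j) such that j is not congruent to i+s (mod n) for any s ∈ {1,…,k−1}. -/
open scoped Classical

/-- In a zero-band generator matrix of an `[n,k]` MDS code, every
entry outside the prescribed zero band is nonzero. -/
theorem zero_band_MDS_entries_nonzero
    (F : Type*) [Field F] (k n : ℕ) (hk : 1 ≤ k) (hkn : k ≤ n)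
    (Z : Matrix (Fin k) (Fin n) F)
    (hrank : Z.rank = k)
    (hMDS : ∀ v : Fin n → F, v ∈ Submodule.span F (Set.range Z) → v ≠ 0 →
        n - k + 1 ≤ (Finset.univ.filter (fun j : Fin n => v j ≠ 0)).card)
    (hband : ∀ (i : Fin k) (j : Fin n),
        (∃ s : ℕ, 1 ≤ s ∧ s ≤ k - 1 ∧ (j : ℕ) = ((i : ℕ) + s) % n) → Z i j = 0) :
    ∀ (i : Fin k) (j : Fin n),
      (¬ ∃ s : ℕ, 1 ≤ s ∧ s ≤ k - 1 ∧ (j : ℕ) = ((i : ℕ) + s) % n) → Z i j ≠ 0 := by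
  intro i j hj hz
  have hn : 0 < n := by omega
  have hli : LinearIndependent F Z.row := by
    rw [linearIndependent_iff_card_eq_finrank_span, Set.finrank, ← Matrix.rank_eq_finrank_span_row,
      hrank, Fintype.card_fin]
  have hne : Z i ≠ 0 := hli.ne_zero i
  have hw := hMDS (Z i) (Submodule.subset_span ⟨i, rfl⟩) hne
  let f : ℕ → Fin n := fun s => ⟨((i : ℕ) + s) % n, Nat.mod_lt _ hn⟩
  have hinj : Set.InjOn f (Finset.Icc 1 (k - 1) : Finset ℕ) := by
    intro a ha b hb hab
    simp only [Finset.coe_Icc, Set.mem_Icc] at ha hb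
    have h1 : ((i : ℕ) + a) ≡ ((i : ℕ) + b) [MOD n] := congrArg Fin.val hab
    have h2 : a ≡ b [MOD n] := Nat.ModEq.add_left_cancel' _ h1
    exact Nat.ModEq.eq_of_lt_of_lt h2 (by omega) (by omega)
  have hjn : j ∉ (Finset.Icc 1 (k - 1)).image f := by
    intro h
    obtain ⟨s, hs, hsj⟩ := Finset.mem_image.mp h
    rw [Finset.mem_Icc] at hs
    exact hj ⟨s, hs.1, hs.2, by rw [← hsj]⟩
  have hc : (insert j ((Finset.Icc 1 (k - 1)).image f)).card = k := by
    rw [Finset.card_insert_of_notMem hjn, Finset.card_image_of_injOn hinj, Nat.card_Icc]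
    omega
  have hsub : insert j ((Finset.Icc 1 (k - 1)).image f) ⊆
      Finset.univ.filter (fun j : Fin n => ¬ (Z i j ≠ 0)) := by
    intro x hx
    rw [Finset.mem_filter]
    refine ⟨Finset.mem_univ _, not_not.mpr ?_⟩
    rcases Finset.mem_insert.mp hx with rfl | h
    · exact hz
    · obtain ⟨s, hs, hsj⟩ := Finset.mem_image.mp h
      rw [Finset.mem_Icc] at hs
      exact hband i x ⟨s, hs.1, hs.2, by rw [← hsj]⟩
  have hle := Finset.card_le_card hsub
  have htot := Finset.card_filter_add_card_filter_not (s := (Finset.univ : Finset (Fin n)))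
    (fun j : Fin n => Z i j ≠ 0)
  rw [Finset.card_univ, Fintype.card_fin] at htot
  omega
end

section
/- For all integers 1 ≤ k ≤ n and every finite field F with |F| ≥ n, there exists a k×n matrix Z = (z_{ij}) over F such that (i) z_{ij} = 0 whenever j ≡ i+s (mod n) for some s ∈ {1,…,k−1}, and (ii) every set of k columns of Z is linearly independent (equivalently, every k×k column-submatrix of Z is invertible). That is, a k×n zero-band MDS generator matrix exists over F whenever |F| ≥ n. -/
open Polynomial in
lemma zb_window_vanish {F : Type*} [Field F] (x : ℕ → F) (φ : F[X] →ₗ[F] F) (d : ℕ) :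
    ∀ m : ℕ, (∀ i j, i < j → j ≤ i + d → x i ≠ x j) →
    (∀ i ≤ d, φ (∏ s ∈ Finset.range d, (X - C (x (m + i + s + 1)))) = 0) →
    ∀ q : F[X], q.natDegree ≤ d → φ q = 0 := by
  induction d with
  | zero =>
    intro m _ h q hq
    have h0 := h 0 le_rfl
    simp only [Finset.range_zero, Finset.prod_empty] at h0
    rw [Polynomial.eq_C_of_natDegree_le_zero hq, ← mul_one (C _), ← smul_eq_C_mul, map_smul, h0,
      smul_zero]
  | succ d ih =>
    intro m hx h q hq
    have key := ih (m + 1) (fun i j hij hj => hx i j hij (by omega)) (by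
      intro i hi
      have h1 := h i (by omega)
      have h2 := h (i + 1) (by omega)
      rw [Finset.prod_range_succ'] at h1
      rw [Finset.prod_range_succ] at h2
      have e1 : ∀ s, m + i + (s + 1) + 1 = m + 1 + i + s + 1 := fun s => by omega
      have e2 : ∀ s, m + (i + 1) + s + 1 = m + 1 + i + s + 1 := fun s => by omega
      simp only [e1] at h1
      simp only [e2] at h2
      set P : F[X] := ∏ s ∈ Finset.range d, (X - C (x (m + 1 + i + s + 1))) with hP
      have h3 : φ ((x (m + 1 + i + d + 1) - x (m + i + 0 + 1)) • P) = 0 := by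
        have : (x (m + 1 + i + d + 1) - x (m + i + 0 + 1)) • P
          = P * (X - C (x (m + i + 0 + 1))) - P * (X - C (x (m + 1 + i + d + 1))) := by
          rw [smul_eq_C_mul, C_sub]; ring
        rw [this, map_sub, h1, h2, sub_zero]
      rw [map_smul, smul_eq_mul] at h3
      rcases mul_eq_zero.1 h3 with h4 | h4
      · exact absurd (sub_eq_zero.1 h4).symm (hx _ _ (by omega) (by omega))
      · exact h4)
    have h0 := h 0 (by omega)
    set P : F[X] := ∏ s ∈ Finset.range (d + 1), (X - C (x (m + 0 + s + 1))) with hP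
    have hm : P.Monic := monic_prod_of_monic _ _ fun s _ => monic_X_sub_C _
    have hd : P.natDegree = d + 1 := by
      rw [hP, natDegree_prod_of_monic _ _ fun s _ => monic_X_sub_C _]; simp
    have h5 := key (q - (q.coeff (d + 1)) • P) (by
      rw [natDegree_le_iff_coeff_eq_zero]
      intro N hN
      rw [coeff_sub, coeff_smul, smul_eq_mul]
      rcases Nat.lt_or_ge (d + 1) N with hN' | hN'
      · rw [coeff_eq_zero_of_natDegree_lt (by omega), coeff_eq_zero_of_natDegree_lt (p := P) (by omega)]
        simp
      · obtain rfl : N = d + 1 := by omega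
        have : P.coeff (d + 1) = 1 := by rw [← hd]; exact hm
        rw [this]; ring)
    rw [map_sub, map_smul, h0] at h5
    simpa using h5

open Polynomial in
/-- Over any finite field `F` with `|F| ≥ n`, for all
`1 ≤ k ≤ n`, a `k × n` zero-band MDS generator matrix exists: a matrix with
zeros on the prescribed band whose every `k` columns are linearly
independent. -/
theorem zero_band_MDS_generator_matrix_exists
    (F : Type*) [Field F] [Fintype F] (k n : ℕ) (hk : 1 ≤ k) (hkn : k ≤ n)
    (hF : n ≤ Fintype.card F) :
    ∃ Z : Matrix (Fin k) (Fin n) F,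
      (∀ (i : Fin k) (j : Fin n),
          (∃ s : ℕ, 1 ≤ s ∧ s ≤ k - 1 ∧ (j : ℕ) = ((i : ℕ) + s) % n) → Z i j = 0) ∧
      (∀ cols : Finset (Fin n), cols.card = k →
          LinearIndependent F (fun j : cols => fun u => Z u (j : Fin n))) := by
  classical
  have hn : 0 < n := by omega
  obtain ⟨a⟩ : Nonempty (Fin n ↪ F) :=
    Function.Embedding.nonempty_of_card_le (by simpa using hF)
  let x : ℕ → F := fun t => a ⟨t % n, Nat.mod_lt _ hn⟩
  refine ⟨fun i j => (∏ s ∈ Finset.range (k - 1), (X - C (x (0 + i + s + 1)))).eval (a j), ?_, ?_⟩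
  · rintro i j ⟨s, h1, h2, h3⟩
    beta_reduce
    rw [eval_prod]
    apply Finset.prod_eq_zero (i := s - 1) (Finset.mem_range.2 (by omega))
    have : x (0 + i + (s - 1) + 1) = a j := by
      have e : 0 + (i : ℕ) + (s - 1) + 1 = i + s := by omega
      rw [e]
      exact congrArg a (Fin.ext h3.symm)
    rw [this, eval_sub, eval_X, eval_C, sub_self]
  · intro cols hc
    rw [Fintype.linearIndependent_iff]
    intro g hg j
    let φ : F[X] →ₗ[F] F := ∑ l : cols, g l • Polynomial.leval (a l)
    have hφ : ∀ q, φ q = ∑ l : cols, g l * q.eval (a l) := by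
      intro q; simp [φ, LinearMap.sum_apply, Polynomial.leval]
    have hv := zb_window_vanish x φ (k - 1) 0 (by
      intro i j hij hj he
      have h1 := congrArg Fin.val (a.injective he)
      have h2 : i ≡ j [MOD n] := h1
      have h3 := Nat.le_of_dvd (by omega) ((Nat.modEq_iff_dvd' hij.le).1 h2)
      omega) (by
      intro i hi
      have h1 := congrFun hg ⟨i, by omega⟩
      rw [hφ]
      simpa [Finset.sum_apply] using h1)
      (∏ l ∈ cols.erase j, (X - C (a l))) (by
        rw [natDegree_prod_of_monic _ _ fun s _ => monic_X_sub_C _]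
        simp [Finset.card_erase_of_mem j.2, hc])
    rw [hφ, Finset.sum_eq_single j] at hv
    · rcases mul_eq_zero.1 hv with h | h
      · exact h
      · rw [eval_prod, Finset.prod_eq_zero_iff] at h
        obtain ⟨l, hl, h⟩ := h
        rw [eval_sub, eval_X, eval_C, sub_eq_zero] at h
        exact absurd (a.injective h).symm (Finset.mem_erase.1 hl).1
    · intro b _ hb
      rw [eval_prod, Finset.prod_eq_zero (i := (b : Fin n)), mul_zero]
      · exact Finset.mem_erase.2 ⟨fun h => hb (Subtype.ext h), b.2⟩
      · simp
    · simp
end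

section
/- Fix integers a ≥ 1, g ≥ 0, ℓ ≥ 1, m ≥ 1, and set τ = m(a+g)+a−1, M = m+ℓ, n = Ma, N = (M−1)(a+g)+a. Let σ(j) = ⌊j/a⌋·(a+g) + (j mod a) for j ∈ {0,…,n−1} (the increasing enumeration of the placement set S), define f_S(j) = max{i ∈ {0,…,n−1} : σ(i) ≤ j} for j ∈ {0,…,N−1}, and r_i = f_S(min{σ(i)+τ, N−1}). Then for every j ∈ {0,…,m+ℓ−1}: r_{ja} = (j+m+1)a − 1 if j < ℓ, and r_{ja} = (m+ℓ)a − 1 if j ≥ ℓ. -/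
theorem aux_sigma_le (a g K i : ℕ) (ha : 1 ≤ a) :
    (i / a) * (a + g) + i % a ≤ K * (a + g) + a - 1 ↔ i / a ≤ K := by
  have h1 : i % a < a := Nat.mod_lt _ ha
  constructor
  · intro h
    by_contra hc
    have h2 : (K + 1) * (a + g) ≤ (i / a) * (a + g) := Nat.mul_le_mul_right _ (by omega)
    rw [Nat.add_mul] at h2
    omega
  · intro h
    have h2 : (i / a) * (a + g) ≤ K * (a + g) := Nat.mul_le_mul_right _ h
    omega

theorem aux_findGreatest (a g K M : ℕ) (ha : 1 ≤ a) (hK : K + 1 ≤ M) :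
    Nat.findGreatest (fun i' : ℕ => (i' / a) * (a + g) + i' % a ≤ K * (a + g) + a - 1)
      (M * a - 1) = (K + 1) * a - 1 := by
  have hMa : (K + 1) * a ≤ M * a := Nat.mul_le_mul_right _ hK
  have hpos : 0 < (K + 1) * a := by positivity
  rw [Nat.findGreatest_eq_iff]
  refine ⟨by omega, fun _ => ?_, fun n hn _ => ?_⟩
  · rw [aux_sigma_le a g K _ ha]
    have : ((K + 1) * a - 1) / a < K + 1 := by
      rw [Nat.div_lt_iff_lt_mul ha]; omega
    omega
  · rw [aux_sigma_le a g K _ ha]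
    have : K + 1 ≤ n / a := by
      rw [Nat.le_div_iff_mul_le ha]; omega
    omega

/-- With `τ = m(a+g)+a−1`, `M = m+ℓ`, `n = Ma`,
`N = (M−1)(a+g)+a`, `σ(j) = (j/a)(a+g) + (j mod a)` the increasing enumeration
of the placement set, `f_S(j) = max{i ≤ n−1 : σ(i) ≤ j}` and
`r_i = f_S(min{σ(i)+τ, N−1})`, one has, for all `j ≤ m+ℓ−1`:
`r_{ja} = (j+m+1)a−1` if `j < ℓ`, and `r_{ja} = (m+ℓ)a−1` if `j ≥ ℓ`. -/
theorem r_ja_formula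
    (a g ℓ m : ℕ) (ha : 1 ≤ a) (hℓ : 1 ≤ ℓ) (hm : 1 ≤ m) :
    ∀ j : ℕ, j ≤ m + ℓ - 1 →
      (fun i : ℕ =>
          Nat.findGreatest
            (fun i' : ℕ => (i' / a) * (a + g) + i' % a
              ≤ min ((i / a) * (a + g) + i % a + (m * (a + g) + a - 1))
                    ((m + ℓ - 1) * (a + g) + a - 1))
            ((m + ℓ) * a - 1)) (j * a)
        = if j < ℓ then (j + m + 1) * a - 1 else (m + ℓ) * a - 1 := by
  intro j hj
  have hd : j * a / a = j := Nat.mul_div_cancel _ ha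
  have hr : j * a % a = 0 := Nat.mul_mod_left _ _
  have hs : j * (a + g) + 0 + (m * (a + g) + a - 1) = (j + m) * (a + g) + a - 1 := by
    rw [Nat.add_mul]; omega
  simp only [hd, hr, hs]
  split_ifs with h
  · have h2 : (j + m) * (a + g) ≤ (m + ℓ - 1) * (a + g) := Nat.mul_le_mul_right _ (by omega)
    rw [min_eq_left (by omega)]
    exact aux_findGreatest a g (j + m) (m + ℓ) ha (by omega)
  · have h2 : (m + ℓ - 1) * (a + g) ≤ (j + m) * (a + g) := Nat.mul_le_mul_right _ (by omega)
    rw [min_eq_right (by omega)]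
    have := aux_findGreatest a g (m + ℓ - 1) (m + ℓ) ha (by omega)
    rwa [show m + ℓ - 1 + 1 = m + ℓ by omega] at this
end

section
/- Fix integers a ≥ 1, g ≥ 0, ℓ ≥ 1, m ≥ 1, and set b = ℓ(a+g), M = m+ℓ, n = Ma, N = (M−1)(a+g)+a. Let σ(j) = ⌊j/a⌋·(a+g) + (j mod a) for j ∈ {0,…,n−1} and f_S(j) = max{i ∈ {0,…,n−1} : σ(i) ≤ j} for j ∈ {0,…,N−1}. Then for every i ∈ {0,…,n−1}, the image under f_S of the burst window {j : σ(i) ≤ j ≤ min(σ(i)+b−1, N−1)} equals the interval of consecutive indices {i, i+1, …, min(i+ℓa−1, n−1)}; in particular, a burst of b consecutive erasures starting at σ(i) erases exactly ℓa consecutive symbols of the base codeword whenever i + ℓa − 1 ≤ n−1. -/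
theorem bw_sigma_eq (a g j : ℕ) : (j / a) * (a + g) + j % a = j + (j / a) * g := by
  have h := Nat.div_add_mod j a
  rw [Nat.mul_comm a] at h
  rw [Nat.mul_add]
  omega

theorem bw_strictMono (a g : ℕ) : StrictMono (fun j : ℕ => j + (j / a) * g) := by
  intro x y h
  have h1 : x / a * g ≤ y / a * g := Nat.mul_le_mul_right g (Nat.div_le_div_right h.le)
  show x + x / a * g < y + y / a * g
  omega

theorem bw_shift (a g l i : ℕ) (ha : 1 ≤ a) :
    (i + l * a) + ((i + l * a) / a) * g = i + (i / a) * g + l * (a + g) := by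
  rw [Nat.add_mul_div_right _ _ ha]
  ring

theorem bw_last (a g M : ℕ) (ha : 1 ≤ a) (hM : 1 ≤ M) :
    (M * a - 1) + ((M * a - 1) / a) * g = (M - 1) * (a + g) + a - 1 := by
  obtain ⟨K, rfl⟩ : ∃ K, M = K + 1 := ⟨M - 1, by omega⟩
  have h1 : (K + 1) * a - 1 = (a - 1) + K * a := by
    rw [Nat.add_mul]; omega
  rw [h1, Nat.add_mul_div_right _ _ ha, Nat.div_eq_of_lt (by omega : a - 1 < a)]
  simp only [Nat.add_sub_cancel, Nat.zero_add, Nat.mul_add]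
  omega

/-- With `b = ℓ(a+g)`, `M = m+ℓ`, `n = Ma`, `N = (M−1)(a+g)+a`,
`σ(j) = (j/a)(a+g) + (j mod a)` the increasing enumeration of the placement
set and `f_S(j) = max{i ≤ n−1 : σ(i) ≤ j}`, the image under `f_S` of the burst
window `{j : σ(i) ≤ j ≤ min(σ(i)+b−1, N−1)}` equals the interval
`{i, …, min(i+ℓa−1, n−1)}`, for every `i < n`. -/
theorem burst_window_image
    (a g ℓ m : ℕ) (ha : 1 ≤ a) (hℓ : 1 ≤ ℓ) (hm : 1 ≤ m) :
    ∀ i : ℕ, i < (m + ℓ) * a →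
      (fun j : ℕ =>
          Nat.findGreatest
            (fun i' : ℕ => (i' / a) * (a + g) + i' % a ≤ j) ((m + ℓ) * a - 1)) ''
        Set.Icc ((i / a) * (a + g) + i % a)
          (min ((i / a) * (a + g) + i % a + ℓ * (a + g) - 1)
               ((m + ℓ - 1) * (a + g) + a - 1))
      = Set.Icc i (min (i + ℓ * a - 1) ((m + ℓ) * a - 1)) := by
  intro i hi
  simp only [bw_sigma_eq]
  have hmono := bw_strictMono a g
  have hsh := bw_shift a g ℓ i ha
  have hlast := bw_last a g (m + ℓ) ha (by omega)
  have hb : 1 ≤ ℓ * (a + g) := Nat.mul_pos hℓ (by omega)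
  have hla : 1 ≤ ℓ * a := Nat.mul_pos hℓ ha
  rw [← hlast]
  ext k
  simp only [Set.mem_image, Set.mem_Icc, le_min_iff]
  constructor
  · rintro ⟨j, ⟨h1, h2, h3⟩, rfl⟩
    have hspec := Nat.findGreatest_spec (P := fun i' : ℕ => i' + (i' / a) * g ≤ j)
      (m := i) (n := (m + ℓ) * a - 1) (by omega) h1
    refine ⟨Nat.le_findGreatest (by omega) h1, ?_, Nat.findGreatest_le _⟩
    by_contra hc
    have hle := hmono.monotone (show i + ℓ * a ≤ _ from by
      have := Nat.lt_of_not_le hc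
      exact (by omega : i + ℓ * a ≤
        Nat.findGreatest (fun i' : ℕ => i' + (i' / a) * g ≤ j) ((m + ℓ) * a - 1)))
    beta_reduce at hle hspec
    omega
  · rintro ⟨h1, h2, h3⟩
    have e1 := hmono.monotone h1
    have e2 := hmono (show k < i + ℓ * a by omega)
    have e3 := hmono.monotone h3
    beta_reduce at e1 e2 e3
    refine ⟨k + k / a * g, ⟨e1, by omega, e3⟩, ?_⟩
    rw [Nat.findGreatest_eq_iff]
    refine ⟨h3, fun _ => le_rfl, fun n hn _ => ?_⟩
    exact not_le_of_gt (hmono hn)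
end

section
/- Let a ≤ b ≤ τ be positive integers with gcd(b, τ+1−a) = a+g ≥ a for some integer g ≥ 0, and set ℓ = b/(a+g), m = (τ+1−a)/(a+g), ρ = (m+1)a, r = ℓa, n = (m+ℓ)a, k = ma. Let F be a field, Z = [Z1 | Z2] an a×2a zero-band MDS generator matrix over F, and C an r×(ρ−r) super-regular matrix over F, and let H be the r×n parity-check matrix of the code C_{a,r,ρ} of Construction 1. Let S_{a,b,τ} = ∪_{i=0}^{m+ℓ−1}{i(a+g),…,i(a+g)+a−1} and N = (m+ℓ−1)(a+g)+a. Then the packet-level code SDE(ker H, S_{a,b,τ}) with dispersion span N is an (a,b,τ) streaming code, and its rate k/n equals the optimal rate (τ+1−a)/(τ+1−a+b). -/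
/-- The parity-check matrix `H` of the code `C_{a,r,ρ}` of Construction 1
(with `r = ℓa`): `H(0:a−1, 0:a−1) = I_a`; `H(ia:ia+a−1, ia:ia+a−1) = Z1` for
`i ∈ {1,…,ℓ−1}`; `H(0:r−1, r:ρ−1) = C`;
`H(ia:ia+a−1, ρ+(i−1)a:ρ+ia−1) = Z2` for `i ∈ {1,…,ℓ−1}`; all other entries
zero. -/
def constructionOneH (F : Type*) [Field F] (a ℓ ρ : ℕ) (ha : 0 < a)
    (Z1 Z2 : Matrix (Fin a) (Fin a) F)
    (C : Matrix (Fin (ℓ * a)) (Fin (ρ - ℓ * a)) F) :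
    Matrix (Fin (ℓ * a)) (Fin (ρ - a + ℓ * a)) F :=
  Matrix.of fun u v =>
    if hv1 : (v : ℕ) < ℓ * a then
      if (u : ℕ) / a = (v : ℕ) / a then
        if (v : ℕ) < a then (if (u : ℕ) = (v : ℕ) then 1 else 0)
        else Z1 ⟨(u : ℕ) % a, Nat.mod_lt _ ha⟩ ⟨(v : ℕ) % a, Nat.mod_lt _ ha⟩
      else 0
    else if hv2 : (v : ℕ) < ρ then
      C u ⟨(v : ℕ) - ℓ * a, by omega⟩
    else
      if (u : ℕ) / a = ((v : ℕ) - ρ) / a + 1 then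
        Z2 ⟨(u : ℕ) % a, Nat.mod_lt _ ha⟩ ⟨((v : ℕ) - ρ) % a, Nat.mod_lt _ ha⟩
      else 0

theorem sde_sum_two {F : Type*} [Field F] (a : ℕ) (f : Fin (2 * a) → F) :
    ∑ v, f v = ∑ k : Fin a, f ⟨(k : ℕ), by have := k.isLt; omega⟩
      + ∑ k : Fin a, f ⟨a + (k : ℕ), by have := k.isLt; omega⟩ := by
  rw [← (finCongr (two_mul a).symm).sum_comp, Fin.sum_univ_add]
  rfl

theorem sde_superreg {F : Type*} [Field F] {r q : ℕ} (C : Matrix (Fin r) (Fin q) F)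
    (hC : ∀ (s : ℕ) (ri : Fin s → Fin r) (ci : Fin s → Fin q),
        Function.Injective ri → Function.Injective ci →
        (C.submatrix ri ci).det ≠ 0)
    (R K : Finset ℕ) (hR : ∀ u ∈ R, u < r) (hK : ∀ k ∈ K, k < q) (hc : K.card ≤ R.card)
    (w : Fin q → F) (hw : ∀ k : Fin q, (k : ℕ) ∉ K → w k = 0)
    (heq : ∀ u : Fin r, (u : ℕ) ∈ R → ∑ k, C u k * w k = 0) : ∀ k, w k = 0 := by
  obtain ⟨R', hR'R, hR'c⟩ := Finset.exists_subset_card_eq hc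
  have hR'' : ∀ u ∈ R', u < r := fun u hu => hR u (hR'R hu)
  have c1 : (R'.attachFin hR'').card = K.card := by rw [Finset.card_attachFin, hR'c]
  have c2 : (K.attachFin hK).card = K.card := Finset.card_attachFin _ _
  set ri := (R'.attachFin hR'').orderEmbOfFin c1 with hri
  set ci := (K.attachFin hK).orderEmbOfFin c2 with hci
  have hdet := hC _ ri ci ri.injective ci.injective
  have hrange : ∀ k : Fin q, (k : ℕ) ∈ K → ∃ i, ci i = k := by
    intro k hk
    have : k ∈ Set.range ci := by
      rw [hci, Finset.range_orderEmbOfFin]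
      simpa using hk
    exact this
  have hmv : (C.submatrix ri ci).mulVec (fun i => w (ci i)) = 0 := by
    funext i
    have hu : ((ri i : Fin r) : ℕ) ∈ R := by
      have := Finset.orderEmbOfFin_mem (R'.attachFin hR'') c1 i
      rw [Finset.mem_attachFin] at this
      exact hR'R this
    rw [Pi.zero_apply, ← heq _ hu]
    simp only [Matrix.mulVec, dotProduct, Matrix.submatrix_apply]
    refine Finset.sum_of_injOn ci (ci.injective.injOn) (by simp [Set.MapsTo]) ?_ (by simp)
    intro k _ hk
    rw [hw k, mul_zero]
    intro hkK
    obtain ⟨i', hi'⟩ := hrange k hkK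
    exact hk ⟨i', by simp, hi'⟩
  have := Matrix.eq_zero_of_mulVec_eq_zero hdet hmv
  intro k
  by_cases hk : (k : ℕ) ∈ K
  · obtain ⟨i, rfl⟩ := hrange k hk
    exact congrFun this i
  · exact hw k hk

theorem sde_mds {F : Type*} [Field F] {a : ℕ}
    (Z : Matrix (Fin a) (Fin (2 * a)) F)
    (hZMDS : ∀ cols : Finset (Fin (2 * a)), cols.card = a →
        LinearIndependent F (fun j : cols => fun u => Z u (j : Fin (2 * a))))
    (K : Finset (Fin (2 * a))) (hK : K.card ≤ a) (w : Fin (2 * a) → F)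
    (hw : ∀ k, k ∉ K → w k = 0) (heq : ∀ u, ∑ k, Z u k * w k = 0) : ∀ k, w k = 0 := by
  obtain ⟨K', hKK', hK'c⟩ := Finset.exists_superset_card_eq hK
    (by rw [Fintype.card_fin]; omega)
  have hli := Fintype.linearIndependent_iff.1 (hZMDS K' hK'c) (fun j => w j) (by
    funext u
    rw [Finset.sum_apply, Pi.zero_apply, ← heq u]
    simp only [Pi.smul_apply, smul_eq_mul]
    rw [Finset.sum_coe_sort K' (fun j => w j * Z u j)]
    rw [← Finset.sum_subset (Finset.subset_univ K')]
    · exact Finset.sum_congr rfl fun _ _ => mul_comm _ _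
    · intro k _ hk
      rw [hw k (fun h => hk (hKK' h)), mul_zero])
  intro k
  by_cases hk : k ∈ K'
  · exact hli ⟨k, hk⟩
  · exact hw k (fun h => hk (hKK' h))

theorem sde_diag {F : Type*} [Field F] {a : ℕ}
    (Z : Matrix (Fin a) (Fin (2 * a)) F)
    (hZband : ∀ (i : Fin a) (j : Fin (2 * a)),
        (∃ s : ℕ, 1 ≤ s ∧ s ≤ a - 1 ∧ (j : ℕ) = ((i : ℕ) + s) % (2 * a)) → Z i j = 0)
    (hZMDS : ∀ cols : Finset (Fin (2 * a)), cols.card = a →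
        LinearIndependent F (fun j : cols => fun u => Z u (j : Fin (2 * a))))
    (c : Fin a) : Z c ⟨(c : ℕ), by have := c.isLt; omega⟩ ≠ 0 := by
  intro h0
  have hcl := c.isLt
  let φ : Fin a → Fin (2 * a) := fun k => ⟨(c : ℕ) + k, by have := k.isLt; omega⟩
  have hφ : Function.Injective φ := by
    intro x y h
    have := congrArg Fin.val h
    simp only [φ] at this
    exact Fin.ext (by omega)
  have hdet : (Z.submatrix id φ).det = 0 := by
    refine Matrix.det_eq_zero_of_row_eq_zero c ?_
    intro k
    rw [Matrix.submatrix_apply]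
    have hk := k.isLt
    by_cases hk0 : (k : ℕ) = 0
    · rw [← h0]
      simp only [id, φ, hk0, add_zero]
    · refine hZband _ _ ⟨k, by omega, by omega, ?_⟩
      rw [Nat.mod_eq_of_lt (by omega)]
      rfl
  obtain ⟨v, hv, hv0⟩ := Matrix.exists_mulVec_eq_zero_iff.2 hdet
  apply hv
  let w : Fin (2 * a) → F := Function.extend φ v 0
  have hwφ : ∀ k, w (φ k) = v k := fun k => hφ.extend_apply _ _ _
  have hw := sde_mds Z hZMDS (Finset.univ.image φ)
    (le_trans Finset.card_image_le (by simp)) w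
    (by
      intro k hk
      have : ¬ ∃ x, φ x = k := by simpa using hk
      simp only [w]
      rw [Function.extend_apply' _ _ _ this, Pi.zero_apply])
    (by
      intro u
      have := congrFun hv0 u
      simp only [Matrix.mulVec, dotProduct, Matrix.submatrix_apply, id, Pi.zero_apply] at this
      rw [← this]
      symm
      refine Finset.sum_of_injOn φ hφ.injOn (by simp [Set.MapsTo]) ?_ (by simp [hwφ])
      intro k _ hk
      have : ¬ ∃ x, φ x = k := by simpa using hk
      simp only [w]
      rw [Function.extend_apply' _ _ _ this, Pi.zero_apply, mul_zero])
  funext k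
  rw [← hwφ k, hw, Pi.zero_apply]

/-- Row equations of Construction 1, in terms of a vector indexed by natural numbers. -/
theorem sde_rows {F : Type*} [Field F] {a ℓ m : ℕ} (ha : 0 < a) (hℓ : 0 < ℓ) (hlm : ℓ ≤ m)
    (Z1 Z2 : Matrix (Fin a) (Fin a) F)
    (C : Matrix (Fin (ℓ * a)) (Fin ((m + 1) * a - ℓ * a)) F)
    (V : ℕ → F)
    (hV : (constructionOneH F a ℓ ((m + 1) * a) ha Z1 Z2 C).mulVec (fun i => V i) = 0) :
    (∀ u : Fin (ℓ * a), (u : ℕ) < a → V u + ∑ k, C u k * V (ℓ * a + k) = 0) ∧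
    (∀ (u : Fin (ℓ * a)) (i : ℕ) (e : Fin a), 1 ≤ i → (u : ℕ) = i * a + e →
      ∑ f : Fin a, Z1 e f * V (i * a + f) + ∑ k, C u k * V (ℓ * a + k)
        + ∑ f : Fin a, Z2 e f * V ((m + i) * a + f) = 0) := by
  have hla : ℓ * a ≤ m * a := Nat.mul_le_mul_right _ hlm
  have hma : (m + 1) * a = m * a + a := by ring
  have hal : a ≤ ℓ * a := Nat.le_mul_of_pos_left _ hℓ
  constructor
  · intro u hu
    have h := congrFun hV u
    simp only [Matrix.mulVec, dotProduct, Pi.zero_apply] at h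
    rw [← h]
    let φ : Fin 1 ⊕ Fin ((m + 1) * a - ℓ * a) → Fin ((m + 1) * a - a + ℓ * a) :=
      Sum.elim (fun _ => ⟨u, by omega⟩) (fun k => ⟨ℓ * a + k, by have := k.isLt; omega⟩)
    have key := Finset.sum_of_injOn (s := Finset.univ) (t := Finset.univ)
      (f := Sum.elim (fun _ => V u) (fun k => C u k * V (ℓ * a + k)))
      (g := fun v : Fin ((m + 1) * a - a + ℓ * a) =>
        constructionOneH F a ℓ ((m + 1) * a) ha Z1 Z2 C u v * V v) φ ?_ ?_ ?_ ?_
    · rw [← key, Fintype.sum_sum_type]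
      simp
    · rintro (x | x) _ (y | y) _ hxy
      · congr 1; exact Subsingleton.elim _ _
      · have := congrArg Fin.val hxy
        simp only [φ, Sum.elim_inl, Sum.elim_inr] at this
        omega
      · have := congrArg Fin.val hxy
        simp only [φ, Sum.elim_inl, Sum.elim_inr] at this
        omega
      · have := congrArg Fin.val hxy
        simp only [φ, Sum.elim_inr] at this
        congr 1; exact Fin.ext (by omega)
    · simp [Set.MapsTo]
    · intro v _ hv
      have hu0 : (u : ℕ) / a = 0 := Nat.div_eq_of_lt hu
      have hv1 : (v : ℕ) ≠ u := by
        intro hh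
        exact hv ⟨Sum.inl 0, by simp, Fin.ext hh.symm⟩
      simp only [constructionOneH, Matrix.of_apply]
      split_ifs with h1 h2 h3 h4 h5 h6
      · exact absurd h4.symm hv1
      · simp
      · exfalso
        rw [hu0] at h2
        exact h3 ((Nat.div_eq_zero_iff_lt ha).1 h2.symm)
      · simp
      · exfalso
        exact hv ⟨Sum.inr ⟨v - ℓ * a, by omega⟩, by simp, Fin.ext (by simp [φ]; omega)⟩
      · rw [hu0] at h6; exact absurd h6 (Nat.succ_ne_zero _).symm
      · simp
    · rintro (x | x) _
      · have := u.isLt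
        simp [constructionOneH, φ, hu]
      · have hx := x.isLt
        have : ℓ * a + (x : ℕ) < (m + 1) * a := by omega
        simp [constructionOneH, φ, this]
  · intro u i e hi hue
    have he := e.isLt
    have hul := u.isLt
    have hmi : (m + i) * a = m * a + i * a := by ring
    have hil : i < ℓ := by
      by_contra hcon
      have := Nat.mul_le_mul_right a (not_lt.1 hcon)
      omega
    have hil' : (i + 1) * a ≤ ℓ * a := Nat.mul_le_mul_right a hil
    have hi1 : (i + 1) * a = i * a + a := by ring
    have hia : a ≤ i * a := Nat.le_mul_of_pos_left _ hi
    have hud : (u : ℕ) / a = i := by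
      rw [hue, Nat.div_eq_iff ha]; constructor <;> omega
    have hum : (u : ℕ) % a = e := by
      rw [hue, Nat.mul_add_mod_of_lt he] 
    have h := congrFun hV u
    simp only [Matrix.mulVec, dotProduct, Pi.zero_apply] at h
    rw [← h]
    let φ : Fin a ⊕ (Fin ((m + 1) * a - ℓ * a) ⊕ Fin a) → Fin ((m + 1) * a - a + ℓ * a) :=
      Sum.elim (fun f => ⟨i * a + f, by have := f.isLt; omega⟩)
        (Sum.elim (fun k => ⟨ℓ * a + k, by have := k.isLt; omega⟩)
          (fun f => ⟨(m + i) * a + f, by have := f.isLt; omega⟩))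
    have key := Finset.sum_of_injOn (s := Finset.univ) (t := Finset.univ)
      (f := Sum.elim (fun f : Fin a => Z1 e f * V (i * a + f))
        (Sum.elim (fun k => C u k * V (ℓ * a + k))
          (fun f : Fin a => Z2 e f * V ((m + i) * a + f))))
      (g := fun v : Fin ((m + 1) * a - a + ℓ * a) =>
        constructionOneH F a ℓ ((m + 1) * a) ha Z1 Z2 C u v * V v) φ ?_ ?_ ?_ ?_
    · rw [← key, Fintype.sum_sum_type, Fintype.sum_sum_type]
      simp [add_assoc]
    · rintro (x | x | x) _ (y | y | y) _ hxy <;>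
      · have := congrArg Fin.val hxy
        have := x.isLt
        have := y.isLt
        simp only [φ, Sum.elim_inl, Sum.elim_inr] at *
        first
        | (exfalso; omega)
        | (have hh : x = y := Fin.ext (by omega)
           rw [hh])
    · simp [Set.MapsTo]
    · intro v _ hv
      have hvl := v.isLt
      simp only [constructionOneH, Matrix.of_apply]
      have hdm := Nat.div_add_mod (v : ℕ) a
      have hml := Nat.mod_lt (v : ℕ) ha
      have hdm' := Nat.div_add_mod ((v : ℕ) - (m + 1) * a) a
      have hml' := Nat.mod_lt ((v : ℕ) - (m + 1) * a) ha
      split_ifs with h1 h2 h3 h4 h5 h6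
      · exfalso
        rw [Nat.div_eq_of_lt h3] at h2
        omega
      · exfalso
        rw [Nat.div_eq_of_lt h3] at h2
        omega
      · exfalso
        rw [← h2, hud, mul_comm] at hdm
        exact hv ⟨Sum.inl ⟨v % a, hml⟩, by simp, Fin.ext (by simp only [φ, Sum.elim_inl]; omega)⟩
      · simp
      · exfalso
        exact hv ⟨Sum.inr (Sum.inl ⟨v - ℓ * a, by omega⟩), by simp,
          Fin.ext (by simp only [φ, Sum.elim_inl, Sum.elim_inr]; omega)⟩
      · exfalso
        have h7 : ((v : ℕ) - (m + 1) * a) / a = i - 1 := by omega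
        have h8 : a * (i - 1) = i * a - a := by
          rw [Nat.mul_sub, mul_comm, mul_one]
        rw [h7, h8] at hdm'
        exact hv ⟨Sum.inr (Sum.inr ⟨(v - (m + 1) * a) % a, hml'⟩), by simp,
          Fin.ext (by simp only [φ, Sum.elim_inr]; omega)⟩
      · simp
    · rintro (x | x | x) _
      · have hx := x.isLt
        have h1 : i * a + (x : ℕ) < ℓ * a := by omega
        have h2 : (i * a + (x : ℕ)) / a = i := by
          rw [Nat.div_eq_iff ha]; constructor <;> omega
        have h3 : (i * a + (x : ℕ)) % a = x := Nat.mul_add_mod_of_lt hx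
        have h4 : ¬ (i * a + (x : ℕ) < a) := by omega
        simp only [constructionOneH, φ, Sum.elim_inl, Matrix.of_apply, h1, h2, h3, h4, hud, hum,
          if_true, if_false, dif_pos]
      · have hx := x.isLt
        have : ℓ * a + (x : ℕ) < (m + 1) * a := by omega
        simp [constructionOneH, φ, this]
      · have hx := x.isLt
        have h1 : ¬ ((m + i) * a + (x : ℕ) < ℓ * a) := by omega
        have h1' : ¬ ((m + i) * a + (x : ℕ) < (m + 1) * a) := by omega
        have h0 : (m + i) * a + (x : ℕ) - (m + 1) * a = (i - 1) * a + x := by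
          rw [Nat.sub_mul, one_mul]; omega
        have h2 : ((i - 1) * a + (x : ℕ)) / a = i - 1 := by
          rw [Nat.div_eq_iff ha]; constructor <;> omega
        have h3 : ((i - 1) * a + (x : ℕ)) % a = x := Nat.mul_add_mod_of_lt hx
        have h4 : i = i - 1 + 1 := by omega
        simp only [constructionOneH, φ, Sum.elim_inr, Matrix.of_apply, h1, h1', h0, h2, h3, hud,
          hum, ← h4, if_true, dif_neg, not_false_eq_true]

theorem sde_core {F : Type*} [Field F] {a ℓ m : ℕ} (ha : 0 < a) (hℓ : 0 < ℓ) (hlm : ℓ ≤ m)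
    (Z : Matrix (Fin a) (Fin (2 * a)) F)
    (hZband : ∀ (i : Fin a) (j : Fin (2 * a)),
        (∃ s : ℕ, 1 ≤ s ∧ s ≤ a - 1 ∧ (j : ℕ) = ((i : ℕ) + s) % (2 * a)) → Z i j = 0)
    (hZMDS : ∀ cols : Finset (Fin (2 * a)), cols.card = a →
        LinearIndependent F (fun j : cols => fun u => Z u (j : Fin (2 * a))))
    (Z1 Z2 : Matrix (Fin a) (Fin a) F)
    (hZ1 : ∀ (i j : Fin a), Z1 i j = Z i ⟨(j : ℕ), by have := j.isLt; omega⟩)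
    (hZ2 : ∀ (i j : Fin a), Z2 i j = Z i ⟨a + (j : ℕ), by have := j.isLt; omega⟩)
    (C : Matrix (Fin (ℓ * a)) (Fin ((m + 1) * a - ℓ * a)) F)
    (hC : ∀ (s : ℕ) (ri : Fin s → Fin (ℓ * a)) (ci : Fin s → Fin ((m + 1) * a - ℓ * a)),
        Function.Injective ri → Function.Injective ci →
        (C.submatrix ri ci).det ≠ 0)
    (V : ℕ → F)
    (h0 : ∀ u : Fin (ℓ * a), (u : ℕ) < a → V u + ∑ k, C u k * V (ℓ * a + k) = 0)
    (h1 : ∀ (u : Fin (ℓ * a)) (i : ℕ) (e : Fin a), 1 ≤ i → (u : ℕ) = i * a + e →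
      ∑ f : Fin a, Z1 e f * V (i * a + f) + ∑ k, C u k * V (ℓ * a + k)
        + ∑ f : Fin a, Z2 e f * V ((m + i) * a + f) = 0)
    (j : ℕ) (c : Fin a) (hj : j < m + ℓ)
    (hlt : ∀ k, k < j * a + c → V k = 0)
    (hav : (∀ k, j * a + c + ℓ * a ≤ k → k < (j + m + 1) * a → V k = 0) ∨
      ∃ Er : Finset ℕ, Er.card ≤ a ∧ ∀ k, k ∉ Er → k < (j + m + 1) * a → V k = 0) :
    V (j * a + c) = 0 := by
  have hla : ℓ * a ≤ m * a := Nat.mul_le_mul_right _ hlm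
  have hma : (m + 1) * a = m * a + a := by ring
  have hal : a ≤ ℓ * a := Nat.le_mul_of_pos_left _ hℓ
  have hjm : (j + m + 1) * a = j * a + m * a + a := by ring
  have hcl := c.isLt
  have hZ1t : ∀ e f : Fin a, (e : ℕ) < f → Z1 e f = 0 := by
    intro e f hef
    have := f.isLt
    rw [hZ1]
    refine hZband _ _ ⟨f - e, by omega, by omega, ?_⟩
    rw [Nat.mod_eq_of_lt (by omega)]
    show (f : ℕ) = _
    omega
  have hZ2t : ∀ e f : Fin a, (f : ℕ) < e → Z2 e f = 0 := by
    intro e f hef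
    have := e.isLt
    rw [hZ2]
    refine hZband _ _ ⟨a + f - e, by omega, by omega, ?_⟩
    rw [Nat.mod_eq_of_lt (by omega)]
    show a + (f : ℕ) = _
    omega
  -- joint use of the MDS property for a block row
  have hblock : ∀ i, ∀ K : Finset (Fin (2 * a)), K.card ≤ a →
      (∀ v : Fin (2 * a), v ∉ K →
        (if (v : ℕ) < a then V (i * a + v) else V ((m + i) * a + (v - a))) = 0) →
      (∀ e : Fin a, ∑ f : Fin a, Z1 e f * V (i * a + f)
        + ∑ f : Fin a, Z2 e f * V ((m + i) * a + f) = 0) →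
      (∀ f : Fin a, V (i * a + f) = 0) ∧ (∀ f : Fin a, V ((m + i) * a + f) = 0) := by
    intro i K hK hw heq
    have := sde_mds Z hZMDS K hK
      (fun v => if (v : ℕ) < a then V (i * a + v) else V ((m + i) * a + (v - a))) hw (by
        intro e
        rw [sde_sum_two, ← heq e]
        congr 1
        · refine Finset.sum_congr rfl fun f _ => ?_
          rw [hZ1]; simp
        · refine Finset.sum_congr rfl fun f _ => ?_
          rw [hZ2]; simp)
    constructor
    · intro f
      simpa using this ⟨f, by have := f.isLt; omega⟩
    · intro f
      simpa using this ⟨a + f, by have := f.isLt; omega⟩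
  by_cases hjgt : m < j
  · -- symbols in the Z2 part
    obtain ⟨i, rfl⟩ : ∃ i, j = m + i := ⟨j - m, by omega⟩
    have hmi : (m + i) * a = m * a + i * a := by ring
    have hia : a ≤ i * a := Nat.le_mul_of_pos_left _ (by omega)
    have hil' : (i + 1) * a ≤ ℓ * a := Nat.mul_le_mul_right a (by omega)
    have hi1 : (i + 1) * a = i * a + a := by ring
    refine (hblock i (Finset.univ.filter fun v => a ≤ (v : ℕ)) ?_ ?_ ?_).2 c
    · have : (Finset.univ.filter fun v : Fin (2 * a) => a ≤ (v : ℕ)).card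
          ≤ (Finset.Ico a (2 * a)).card := by
        refine Finset.card_le_card_of_injOn (fun v => (v : ℕ)) ?_ ?_
        · intro v hv
          have := v.isLt
          simp at hv
          simp
          omega
        · exact Fin.val_injective.injOn
      rw [Nat.card_Ico] at this
      omega
    · intro v hv
      have hv' : (v : ℕ) < a := by simpa using hv
      rw [if_pos hv']
      exact hlt _ (by omega)
    · intro e
      have he := e.isLt
      have := h1 ⟨i * a + e, by omega⟩ i e (by omega) rfl
      rw [Finset.sum_eq_zero (f := fun k => C _ k * V (ℓ * a + k)), add_zero] at this
      · exact this
      · intro k _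
        have := k.isLt
        rw [hlt _ (by omega), mul_zero]
  have hjle : j ≤ m := not_lt.1 hjgt
  have hja : j * a ≤ m * a := Nat.mul_le_mul_right _ hjle
  -- first: all symbols in the C part vanish
  have hCz : ∀ k : Fin ((m + 1) * a - ℓ * a), V (ℓ * a + k) = 0 := by
    rcases hav with hav | ⟨Er, hErc, hav⟩
    · -- burst
      have hclean : ∀ u : Fin (ℓ * a), (u : ℕ) < j * a + c →
          ((u : ℕ) < a ∨ j * a + c + ℓ * a ≤ m * a + u ∨ j * a + c + ℓ * a ≤ m * a + a) →
          ∑ k, C u k * V (ℓ * a + k) = 0 := by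
        intro u hup hcase
        by_cases hua : (u : ℕ) < a
        · have := h0 u hua
          rwa [hlt _ hup, zero_add] at this
        · have hdm : (u : ℕ) = (u : ℕ) / a * a + (u : ℕ) % a  :=
            (Nat.div_add_mod' _ _).symm
          have hml := Nat.mod_lt (u : ℕ) ha
          have hi : 1 ≤ (u : ℕ) / a := (Nat.one_le_div_iff ha).2 (not_lt.1 hua)
          have hij : (u : ℕ) / a ≤ j := by
            have h5 : (u : ℕ) < (j + 1) * a := by
              have : (j + 1) * a = j * a + a := by ring
              omega
            have := (Nat.div_lt_iff_lt_mul ha).2 h5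
            omega
          have := h1 u _ ⟨_, hml⟩ hi hdm
          generalize (u : ℕ) / a = i at *
          have hmi : (m + i) * a = m * a + i * a := by ring
          have hia : a ≤ i * a := Nat.le_mul_of_pos_left _ (by omega)
          have hija : i * a ≤ j * a := Nat.mul_le_mul_right _ hij
          rw [Finset.sum_eq_zero (f := fun f : Fin a => Z1 _ f * V (i * a + f)), zero_add,
            Finset.sum_eq_zero (f := fun f : Fin a => Z2 _ f * V ((m + i) * a + f)),
            add_zero] at this
          · exact this
          · intro f _
            have hfl := f.isLt
            by_cases hf : (f : ℕ) < (u : ℕ) % a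
            · rw [hZ2t _ _ hf, zero_mul]
            · rw [hav _ (by omega) (by omega), mul_zero]
          · intro f _
            by_cases hf : (u : ℕ) % a < (f : ℕ)
            · rw [hZ1t _ _ hf, zero_mul]
            · rw [hlt _ (by omega), mul_zero]
      by_cases hA : j * a + c + ℓ * a ≤ m * a + a
      · refine sde_superreg C hC (Finset.range (min (j * a + c) (ℓ * a)))
          (Finset.Ico (j * a + c - ℓ * a) (min (j * a + c) ((m + 1) * a - ℓ * a))) ?_ ?_ ?_
          (fun k => V (ℓ * a + k)) ?_ ?_
        · intro u hu; rw [Finset.mem_range] at hu; omega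
        · intro u hu; rw [Finset.mem_Ico] at hu; omega
        · rw [Nat.card_Ico, Finset.card_range]; omega
        · intro k hk
          have hkl := k.isLt
          rw [Finset.mem_Ico] at hk
          by_cases h : ℓ * a + (k : ℕ) < j * a + c
          · exact hlt _ h
          · exact hav _ (by omega) (by omega)
        · intro u hu
          rw [Finset.mem_range] at hu
          exact hclean u (by omega) (by omega)
      · refine sde_superreg C hC
          (Finset.range a ∪ Finset.Ico (j * a + c + ℓ * a - m * a) (min (j * a + c) (ℓ * a)))
          (Finset.Ico (j * a + c - ℓ * a) (min (j * a + c) ((m + 1) * a - ℓ * a))) ?_ ?_ ?_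
          (fun k => V (ℓ * a + k)) ?_ ?_
        · intro u hu; rw [Finset.mem_union, Finset.mem_range, Finset.mem_Ico] at hu; omega
        · intro u hu; rw [Finset.mem_Ico] at hu; omega
        · rw [Finset.card_union_of_disjoint, Nat.card_Ico, Finset.card_range, Nat.card_Ico]
          · omega
          · rw [Finset.disjoint_left]
            intro u hu hu'
            rw [Finset.mem_range] at hu
            rw [Finset.mem_Ico] at hu'
            omega
        · intro k hk
          have hkl := k.isLt
          rw [Finset.mem_Ico] at hk
          by_cases h : ℓ * a + (k : ℕ) < j * a + c
          · exact hlt _ h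
          · exact hav _ (by omega) (by omega)
        · intro u hu
          rw [Finset.mem_union, Finset.mem_range, Finset.mem_Ico] at hu
          have hj0 : j ≠ 0 := by
            rintro rfl
            omega
          have hj1 : a ≤ j * a := Nat.le_mul_of_pos_left _ (by omega)
          exact hclean u (by omega) (by omega)
    · -- arbitrary erasures
      refine sde_superreg C hC (Finset.range a \ Er)
          ((Er.filter fun k => ℓ * a ≤ k ∧ k < (m + 1) * a).image fun k => k - ℓ * a) ?_ ?_ ?_
          (fun k => V (ℓ * a + k)) ?_ ?_
      · intro u hu; rw [Finset.mem_sdiff, Finset.mem_range] at hu; omega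
      · intro u hu
        rw [Finset.mem_image] at hu
        obtain ⟨k, hk, rfl⟩ := hu
        rw [Finset.mem_filter] at hk
        omega
      · have e1 := Finset.card_sdiff_add_card_inter (Finset.range a) Er
        rw [Finset.card_range] at e1
        have e2 : (Finset.range a ∩ Er ∪
            Er.filter fun k => ℓ * a ≤ k ∧ k < (m + 1) * a).card ≤ Er.card := by
          refine Finset.card_le_card (Finset.union_subset Finset.inter_subset_right
            (Finset.filter_subset _ _))
        rw [Finset.card_union_of_disjoint] at e2
        · have e3 := Finset.card_image_le
            (s := Er.filter fun k => ℓ * a ≤ k ∧ k < (m + 1) * a) (f := fun k => k - ℓ * a)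
          omega
        · rw [Finset.disjoint_left]
          intro u hu hu'
          rw [Finset.mem_inter, Finset.mem_range] at hu
          rw [Finset.mem_filter] at hu'
          omega
      · intro k hk
        have hkl := k.isLt
        refine hav _ ?_ (by omega)
        intro hk'
        exact hk (Finset.mem_image.2 ⟨ℓ * a + k,
          Finset.mem_filter.2 ⟨hk', by omega, by omega⟩, by omega⟩)
      · intro u hu
        rw [Finset.mem_sdiff, Finset.mem_range] at hu
        have := h0 u hu.1
        rwa [hav _ hu.2 (by omega), zero_add] at this
  have hCs : ∀ u, ∑ k, C u k * V (ℓ * a + k) = 0 := fun u =>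
    Finset.sum_eq_zero fun k _ => by rw [hCz, mul_zero]
  by_cases hjl : ℓ ≤ j
  · have := Nat.mul_le_mul_right a hjl
    have h := hCz ⟨j * a + c - ℓ * a, by omega⟩
    have e : ℓ * a + (j * a + c - ℓ * a) = j * a + c := by omega
    simpa only [e] using h
  have hjl' : (j + 1) * a ≤ ℓ * a := Nat.mul_le_mul_right a (by omega)
  have hj1 : (j + 1) * a = j * a + a := by ring
  rcases Nat.eq_zero_or_pos j with rfl | hjpos
  · have := h0 ⟨0 * a + c, by omega⟩ (by simp)
    rwa [hCs, add_zero] at this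
  have hmj : (m + j) * a = m * a + j * a := by ring
  have hma' : a ≤ m * a := by omega
  have hrow : ∀ e : Fin a, ∑ f : Fin a, Z1 e f * V (j * a + f)
        + ∑ f : Fin a, Z2 e f * V ((m + j) * a + f) = 0 := by
    intro e
    have he := e.isLt
    have := h1 ⟨j * a + e, by omega⟩ j e hjpos rfl
    rwa [hCs, add_zero] at this
  rcases hav with hav | ⟨Er, hErc, hav⟩
  · have := hrow c
    rw [Finset.sum_eq_zero (f := fun f : Fin a => Z2 _ f * V ((m + j) * a + f)), add_zero,
      Finset.sum_eq_single c] at this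
    · rcases mul_eq_zero.1 this with h | h
      · exfalso
        rw [hZ1] at h
        exact sde_diag Z hZband hZMDS c h
      · exact h
    · intro f _ hfc
      have hfc' : (f : ℕ) ≠ c := fun h => hfc (Fin.ext h)
      by_cases hf : (c : ℕ) < f
      · rw [hZ1t _ _ hf, zero_mul]
      · rw [hlt _ (by omega), mul_zero]
    · simp
    · intro f _
      have hfl := f.isLt
      by_cases hf : (f : ℕ) < c
      · rw [hZ2t _ _ hf, zero_mul]
      · rw [hav _ (by omega) (by omega), mul_zero]
  · let φ : Fin (2 * a) → ℕ := fun v =>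
      if (v : ℕ) < a then j * a + v else (m + j) * a + (v - a)
    refine (hblock j (Finset.univ.filter fun v => φ v ∈ Er) ?_ ?_ hrow).1 c
    · refine le_trans (Finset.card_le_card_of_injOn φ ?_ ?_) hErc
      · intro v hv
        simpa using hv
      · intro v _ v' _ h
        simp only [φ] at h
        have := v.isLt
        have := v'.isLt
        refine Fin.ext ?_
        split_ifs at h <;> omega
    · intro v hv
      have hvl := v.isLt
      have hv' : φ v ∉ Er := by simpa using hv
      simp only [φ] at hv'
      split_ifs at hv' ⊢ with h
      · exact hav _ hv' (by omega)
      · exact hav _ hv' (by omega)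

/-- For `gcd(b, τ+1−a) = a+g ≥ a`, `ℓ = b/(a+g)`,
`m = (τ+1−a)/(a+g)`, SDE of the code with parity-check matrix
`H = constructionOneH` (Construction 1 with `ρ = (m+1)a`, `r = ℓa`,
`n = (m+ℓ)a`) with placement set `S_{a,b,τ}` (whose increasing enumeration is
`σ(j) = (j/a)(a+g) + (j mod a)`) and dispersion span `N = (m+ℓ−1)(a+g)+a` is
an `(a,b,τ)` streaming code of optimal rate `(τ+1−a)/(τ+1−a+b)`. -/
theorem sde_constructionOne_is_streaming_code
    (F : Type*) [Field F] (a b τ g ℓ m : ℕ)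
    (ha : 0 < a) (hab : a ≤ b) (hbτ : b ≤ τ)
    (hgcd : Nat.gcd b (τ + 1 - a) = a + g)
    (hb : b = ℓ * (a + g)) (hτ : τ + 1 - a = m * (a + g))
    (hℓ : 0 < ℓ) (hm : 0 < m)
    (Z : Matrix (Fin a) (Fin (2 * a)) F)
    (hZband : ∀ (i : Fin a) (j : Fin (2 * a)),
        (∃ s : ℕ, 1 ≤ s ∧ s ≤ a - 1 ∧ (j : ℕ) = ((i : ℕ) + s) % (2 * a)) → Z i j = 0)
    (hZMDS : ∀ cols : Finset (Fin (2 * a)), cols.card = a →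
        LinearIndependent F (fun j : cols => fun u => Z u (j : Fin (2 * a))))
    (Z1 Z2 : Matrix (Fin a) (Fin a) F)
    (hZ1 : ∀ (i j : Fin a), Z1 i j = Z i ⟨(j : ℕ), by have := j.isLt; omega⟩)
    (hZ2 : ∀ (i j : Fin a), Z2 i j = Z i ⟨a + (j : ℕ), by have := j.isLt; omega⟩)
    (C : Matrix (Fin (ℓ * a)) (Fin ((m + 1) * a - ℓ * a)) F)
    (hC : ∀ (s : ℕ) (ri : Fin s → Fin (ℓ * a)) (ci : Fin s → Fin ((m + 1) * a - ℓ * a)),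
        Function.Injective ri → Function.Injective ci →
        (C.submatrix ri ci).det ≠ 0) :
    -- SDE(ker H, S_{a,b,τ}) is an (a,b,τ) streaming code
    (∀ (t : ℤ) (E : Finset ℤ), (↑E ⊆ Set.Icc t (t + (τ : ℤ))) → t ∈ E →
        (E.card ≤ a ∨ ∀ e ∈ E, e ≤ t + (b : ℤ) - 1) →
        ∀ x y : ℤ → (Fin ((m + 1) * a - a + ℓ * a) → F),
          (∀ s : ℤ,
              (constructionOneH F a ℓ ((m + 1) * a) ha Z1 Z2 C).mulVec
                (fun i => x (s + ((((i : ℕ) / a) * (a + g) + (i : ℕ) % a : ℕ) : ℤ)) i) = 0) →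
          (∀ s : ℤ,
              (constructionOneH F a ℓ ((m + 1) * a) ha Z1 Z2 C).mulVec
                (fun i => y (s + ((((i : ℕ) / a) * (a + g) + (i : ℕ) % a : ℕ) : ℤ)) i) = 0) →
          (∀ t' : ℤ, t' < t → x t' = y t') →
          (∀ t' : ℤ, t' ∈ Set.Icc t (t + (τ : ℤ)) → t' ∉ E → x t' = y t') →
          x t = y t)
    ∧
    -- the rate k/n is the optimal rate (τ+1−a)/(τ+1−a+b)
    ((m * a : ℕ) : ℚ) / (((m + ℓ) * a : ℕ) : ℚ)
      = ((τ + 1 - a : ℕ) : ℚ) / ((τ + 1 - a + b : ℕ) : ℚ) := by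
  have hq : 0 < a + g := by omega
  have hlm : ℓ ≤ m := by
    by_contra hcon
    have h1 : (m + 1) * (a + g) ≤ ℓ * (a + g) := Nat.mul_le_mul_right _ (by omega)
    have h2 : (m + 1) * (a + g) = m * (a + g) + (a + g) := by ring
    omega
  refine ⟨?_, ?_⟩
  swap
  · rw [hτ, hb]
    have h1 : (a : ℚ) ≠ 0 := by positivity
    have h2 : (a : ℚ) + g ≠ 0 := by positivity
    have h3 : (m : ℚ) + ℓ ≠ 0 := by positivity
    push_cast
    rw [← add_mul, mul_div_mul_right _ _ h1, mul_div_mul_right _ _ h2]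
  intro t E hEsub htE hE x y hx hy hpast hwin
  funext p
  have hla : ℓ * a ≤ m * a := Nat.mul_le_mul_right _ hlm
  have hma : (m + 1) * a = m * a + a := by ring
  have hn : (m + ℓ) * a = m * a + ℓ * a := by ring
  have hpl := p.isLt
  obtain ⟨j, hjdef⟩ : ∃ j, j = (p : ℕ) / a := ⟨_, rfl⟩
  obtain ⟨c, hcdef⟩ : ∃ c, c = (p : ℕ) % a := ⟨_, rfl⟩
  have hca : c < a := hcdef ▸ Nat.mod_lt _ ha
  have hpjc : (p : ℕ) = j * a + c := by rw [hjdef, hcdef]; exact (Nat.div_add_mod' _ _).symm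
  have hj : j < m + ℓ := by
    rw [hjdef]
    exact (Nat.div_lt_iff_lt_mul ha).2 (by omega)
  -- the placement function
  obtain ⟨σ, hσ⟩ : ∃ σ : ℕ → ℕ, ∀ k, σ k = (k / a) * (a + g) + k % a := ⟨_, fun _ => rfl⟩
  have hσmono : StrictMono σ := by
    intro k k' hkk
    rw [hσ, hσ]
    have h1 := Nat.mod_lt k ha
    have h2 : k / a ≤ k' / a := Nat.div_le_div_right hkk.le
    have h3 := Nat.div_add_mod' k a
    have h4 := Nat.div_add_mod' k' a
    generalize k % a = e at *
    generalize k' % a = e' at *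
    generalize k / a = i at *
    generalize k' / a = i' at *
    rcases h2.eq_or_lt with h | h
    · subst h; omega
    · have h5 : (i + 1) * (a + g) ≤ i' * (a + g) := Nat.mul_le_mul_right _ h
      have h6 : (i + 1) * (a + g) = i * (a + g) + (a + g) := by ring
      omega
  have hσp : σ p = j * (a + g) + c := by rw [hσ, hjdef, hcdef]
  have hσb : σ (p + ℓ * a) = σ p + b := by
    rw [hσ, hσ, Nat.add_mul_div_right _ _ ha, Nat.add_mul_mod_self_right, hb]
    ring
  have hσw : ∀ k, k < (j + m + 1) * a → σ k ≤ σ p + τ := by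
    intro k hk
    have h1 : k / a < j + m + 1 := (Nat.div_lt_iff_lt_mul ha).2 hk
    have h2 : k / a * (a + g) ≤ (j + m) * (a + g) := Nat.mul_le_mul_right _ (by omega)
    have h3 : (j + m) * (a + g) = j * (a + g) + m * (a + g) := by ring
    have h4 := Nat.mod_lt k ha
    rw [hσp, hσ]
    omega
  let V : ℕ → F := fun k => if hk : k < (m + 1) * a - a + ℓ * a then
    x (t - (σ p : ℤ) + (σ k : ℤ)) ⟨k, hk⟩ - y (t - (σ p : ℤ) + (σ k : ℤ)) ⟨k, hk⟩ else 0
  have hVz : ∀ k, x (t - (σ p : ℤ) + (σ k : ℤ)) = y (t - (σ p : ℤ) + (σ k : ℤ)) → V k = 0 := by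
    intro k hk
    simp only [V]
    split_ifs
    · rw [hk, sub_self]
    · rfl
  have hVmul : (constructionOneH F a ℓ ((m + 1) * a) ha Z1 Z2 C).mulVec (fun i => V i) = 0 := by
    have h1 := hx (t - (σ p : ℤ))
    have h2 := hy (t - (σ p : ℤ))
    simp only [← hσ] at h1 h2
    rw [← sub_zero (0 : Fin (ℓ * a) → F)]
    nth_rewrite 1 [← h1]
    rw [← h2, ← Matrix.mulVec_sub]
    congr 1
    funext i
    simp only [V, dif_pos i.isLt, Pi.sub_apply]
  obtain ⟨h0, h1⟩ := sde_rows ha hℓ hlm Z1 Z2 C V hVmul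
  have hfin : V (j * a + c) = 0 := by
    refine sde_core ha hℓ hlm Z hZband hZMDS Z1 Z2 hZ1 hZ2 C hC V h0 h1 j ⟨c, hca⟩ hj ?_ ?_
    · intro k hk
      have hk' : k < (p : ℕ) := by rw [hpjc]; exact hk
      have := hσmono hk'
      exact hVz k (hpast _ (by omega))
    · rcases hE with hE | hE
      · right
        refine ⟨(Finset.range ((j + m + 1) * a)).filter
          fun k => t - (σ p : ℤ) + (σ k : ℤ) ∈ E, ?_, ?_⟩
        · refine le_trans (Finset.card_le_card_of_injOn
            (fun k => t - (σ p : ℤ) + (σ k : ℤ)) ?_ ?_) hE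
          · intro k hk
            exact (Finset.mem_filter.1 hk).2
          · intro k _ k' _ hkk
            apply hσmono.injective
            simp only at hkk
            omega
        · intro k hk hkl
          have hw := hσw k hkl
          apply hVz
          by_cases hlt : t - (σ p : ℤ) + (σ k : ℤ) < t
          · exact hpast _ hlt
          · refine hwin _ ⟨by omega, by omega⟩ ?_
            intro hmem
            exact hk (Finset.mem_filter.2 ⟨Finset.mem_range.2 hkl, hmem⟩)
      · left
        intro k hk hkl
        have hw := hσw k hkl
        have hk' : (p : ℕ) + ℓ * a ≤ k := by rw [hpjc]; exact hk
        have hge := hσmono.monotone hk'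
        rw [hσb] at hge
        apply hVz
        refine hwin _ ⟨by omega, by omega⟩ ?_
        intro hmem
        have := hE _ hmem
        omega
  rw [← hpjc] at hfin
  simp only [V, dif_pos hpl, sub_add_cancel] at hfin
  exact sub_eq_zero.1 hfin
end

section
/- Let A be a k×t super-regular matrix over a field F. Then every set of k columns of the k×(k+t) matrix [I_k | A] is linearly independent; equivalently, [I_k | A] is a generator matrix of a [k+t, k] MDS code, and also the code {c ∈ F^{k+t} : [I_k | A]c = 0} is a [k+t, t] MDS code. -/
open scoped Classical


theorem aux_core (F : Type*) [Field F] (k t : ℕ)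
    (A : Matrix (Fin k) (Fin t) F)
    (hA : ∀ (s : ℕ) (ri : Fin s → Fin k) (ci : Fin s → Fin t),
        Function.Injective ri → Function.Injective ci →
        (A.submatrix ri ci).det ≠ 0)
    (x : Fin k → F) (y : Fin t → F) (h : ∀ i, x i + ∑ j, A i j * y j = 0)
    (hc : (Finset.univ.filter (fun i => x i ≠ 0)).card
      + (Finset.univ.filter (fun j => y j ≠ 0)).card ≤ k) : y = 0 := by
  set J := Finset.univ.filter (fun j => y j ≠ 0) with hJ
  have hZ : J.card ≤ (Finset.univ.filter (fun i => x i = 0)).card := by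
    have := Finset.card_filter_add_card_filter_not (s := (Finset.univ : Finset (Fin k)))
      (fun i => x i = 0)
    simp only [Finset.card_univ, Fintype.card_fin] at this
    simp only [ne_eq] at hc
    omega
  obtain ⟨I, hI, hIc⟩ := Finset.exists_subset_card_eq hZ
  let ri := I.orderEmbOfFin hIc
  let ci := J.orderEmbOfFin rfl
  have hd := hA J.card ri ci ri.injective ci.injective
  have hz : (A.submatrix ri ci).mulVec (fun a => y (ci a)) = 0 := by
    funext a
    have hx : x (ri a) = 0 := by
      have := hI (Finset.orderEmbOfFin_mem I hIc a)
      simpa using this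
    have h1 := h (ri a)
    rw [hx, zero_add] at h1
    rw [Pi.zero_apply, ← h1]
    have h2 : ∑ j, A (ri a) j * y j = ∑ j ∈ J, A (ri a) j * y j := by
      symm
      apply Finset.sum_subset (Finset.subset_univ _)
      intro j _ hj
      have : y j = 0 := by simpa [hJ] using hj
      simp [this]
    have h3 : J = Finset.univ.map ci.toEmbedding := by
      simp [ci]
    have h4 : ∑ j ∈ J, A (ri a) j * y j
        = ∑ j ∈ Finset.univ.map ci.toEmbedding, A (ri a) j * y j :=
      Finset.sum_congr h3 fun _ _ => rfl
    rw [h2, h4, Finset.sum_map]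
    rfl
  have hy := Matrix.eq_zero_of_mulVec_eq_zero hd hz
  funext j
  by_contra hj
  have hjJ : j ∈ J := by simpa [hJ] using hj
  have : j ∈ Set.range ci := by simpa [ci] using hjJ
  obtain ⟨a, rfl⟩ := this
  exact hj (congrFun hy a)

/-- If `A` is a `k × t` super-regular matrix, then every set of
`k` columns of `G = [I_k | A]` is linearly independent; equivalently `G`
generates a `[k+t, k]` MDS code (every nonzero vector of its row space has
Hamming weight ≥ t+1), and the code `{c : G c = 0}` is a `[k+t, t]` MDS code
(every nonzero codeword has Hamming weight ≥ k+1). -/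
theorem identity_superregular_is_MDS
    (F : Type*) [Field F] (k t : ℕ)
    (A : Matrix (Fin k) (Fin t) F)
    (hA : ∀ (s : ℕ) (ri : Fin s → Fin k) (ci : Fin s → Fin t),
        Function.Injective ri → Function.Injective ci →
        (A.submatrix ri ci).det ≠ 0)
    (G : Matrix (Fin k) (Fin (k + t)) F)
    (hG : ∀ (u : Fin k) (v : Fin (k + t)),
        G u v = if h : (v : ℕ) < k then (if (u : ℕ) = (v : ℕ) then 1 else 0)
                else A u ⟨(v : ℕ) - k, by have := v.isLt; omega⟩) :
    (∀ cols : Finset (Fin (k + t)), cols.card = k →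
        LinearIndependent F (fun j : cols => fun u => G u (j : Fin (k + t)))) ∧
    (∀ v : Fin (k + t) → F, v ∈ Submodule.span F (Set.range G) → v ≠ 0 →
        t + 1 ≤ (Finset.univ.filter (fun j : Fin (k + t) => v j ≠ 0)).card) ∧
    (∀ c : Fin (k + t) → F, G.mulVec c = 0 → c ≠ 0 →
        k + 1 ≤ (Finset.univ.filter (fun j : Fin (k + t) => c j ≠ 0)).card) := by
  have hG1 : ∀ u i, G u (Fin.castAdd t i) = if u = i then 1 else 0 := by
    intro u i
    rw [hG]
    simp [Fin.ext_iff]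
  have hG2 : ∀ u j, G u (Fin.natAdd k j) = A u j := by
    intro u j
    rw [hG]
    simp
  have core : ∀ c : Fin (k + t) → F, G.mulVec c = 0 →
      (Finset.univ.filter (fun j : Fin (k + t) => c j ≠ 0)).card ≤ k → c = 0 := by
    intro c hc hk
    have hx : ∀ i, c (Fin.castAdd t i) + ∑ j, A i j * c (Fin.natAdd k j) = 0 := by
      intro i
      have := congrFun hc i
      simpa [Matrix.mulVec, dotProduct, Fin.sum_univ_add, hG1, hG2] using this
    have hy := aux_core F k t A hA (fun i => c (Fin.castAdd t i))
      (fun j => c (Fin.natAdd k j)) hx (by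
        rw [Finset.card_filter, Fin.sum_univ_add] at hk
        rw [Finset.card_filter, Finset.card_filter]
        exact hk)
    have hy' : ∀ j, c (Fin.natAdd k j) = 0 := fun j => congrFun hy j
    funext v
    refine Fin.addCases (fun i => ?_) (fun j => ?_) v
    · simpa [hy'] using hx i
    · exact hy' j
  have part1 : ∀ cols : Finset (Fin (k + t)), cols.card = k →
        LinearIndependent F (fun j : cols => fun u => G u (j : Fin (k + t))) := by
    intro cols hcols
    rw [Fintype.linearIndependent_iff]
    intro g hg j
    let c : Fin (k + t) → F := fun v => if h : v ∈ cols then g ⟨v, h⟩ else 0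
    have hcj : ∀ j : cols, c j = g j := fun j => by simp [c]
    have hc : c = 0 := by
      apply core
      · funext u
        have h1 := congrFun hg u
        simp only [Finset.sum_apply, Pi.smul_apply, smul_eq_mul, Pi.zero_apply] at h1
        rw [Pi.zero_apply, ← h1]
        have h2 : ∑ v, G u v * c v = ∑ v ∈ cols, G u v * c v := by
          symm
          apply Finset.sum_subset (Finset.subset_univ _)
          intro v _ hv
          simp [c, hv]
        change ∑ v, G u v * c v = _
        rw [h2, ← Finset.sum_coe_sort]
        refine Finset.sum_congr rfl fun v _ => ?_
        rw [hcj, mul_comm]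
      · refine le_trans (Finset.card_le_card ?_) hcols.le
        intro v hv
        by_contra h
        simp [c, h] at hv
    rw [← hcj, hc]; rfl
  refine ⟨part1, ?_, ?_⟩
  · intro v hv hv0
    by_contra hlt
    obtain ⟨w, hw⟩ := (Submodule.mem_span_range_iff_exists_fun F).1 hv
    have hZ : k ≤ (Finset.univ.filter (fun j => v j = 0)).card := by
      have := Finset.card_filter_add_card_filter_not (s := (Finset.univ : Finset (Fin (k + t))))
        (fun i => v i = 0)
      simp only [Finset.card_univ, Fintype.card_fin] at this
      simp only [ne_eq] at hlt
      omega
    obtain ⟨cols, hI, hIc⟩ := Finset.exists_subset_card_eq hZ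
    have hs := (part1 cols hIc).span_eq_top_of_card_eq_finrank' (by simp [hIc])
    have hw0 : ∀ x : Fin k → F, w ⬝ᵥ x = 0 := by
      intro x
      have hx : x ∈ Submodule.span F
          (Set.range (fun j : cols => fun u => G u (j : Fin (k + t)))) := by
        rw [hs]; trivial
      induction hx using Submodule.span_induction with
      | mem x hx =>
        obtain ⟨j, rfl⟩ := hx
        have h1 : v j = 0 := by simpa using hI j.2
        rw [← hw] at h1
        simpa [dotProduct] using h1
      | zero => simp
      | add x y _ _ h1 h2 => rw [dotProduct_add, h1, h2, add_zero]
      | smul a x _ h1 => rw [dotProduct_smul, h1, smul_zero]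
    have hw1 : w = 0 := dotProduct_eq_zero w hw0
    apply hv0
    rw [← hw, hw1]
    simp
  · intro c hc hc0
    by_contra hlt
    exact hc0 (core c hc (by omega))
end

section
/- Let a ≤ b ≤ τ be positive integers with a | b and τ + 1 ≥ a + b, and set ℓ = b/a, ρ = τ+1, r = b, n = τ+1−a+b, k = τ+1−a. Let F be a field, Z = [Z1 | Z2] an a×2a zero-band MDS generator matrix over F, C an r×(ρ−r) super-regular matrix over F, and H the r×n parity-check matrix of the code C_{a,b,τ+1} of Construction 1. Then the diagonal embedding of ker H (i.e., SDE(ker H, S) with N = n and S = {0,1,…,n−1}) is an (a,b,τ) streaming code, and its rate k/n equals the optimal rate (τ+1−a)/(τ+1−a+b). -/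
theorem aux_C {F : Type*} [Field F] {p k : ℕ} (C : Matrix (Fin p) (Fin k) F)
    (hC : ∀ (s : ℕ) (ri : Fin s → Fin p) (ci : Fin s → Fin k),
        Function.Injective ri → Function.Injective ci → (C.submatrix ri ci).det ≠ 0)
    (r : ℕ) (d : Fin k → F) (S R : Finset ℕ) (hcard : S.card ≤ R.card)
    (hR : ∀ u ∈ R, u < p) (hS : ∀ j : Fin k, d j ≠ 0 → r + (j : ℕ) ∈ S)
    (heq : ∀ u : Fin p, (u : ℕ) ∈ R → ∑ j, C u j * d j = 0) : ∀ j, d j = 0 := by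
  classical
  set S' : Finset (Fin k) := Finset.univ.filter (fun j => d j ≠ 0) with hS'
  have hc1 : S'.card ≤ S.card := by
    apply Finset.card_le_card_of_injOn (fun j : Fin k => r + (j : ℕ))
    · intro j hj
      have : d j ≠ 0 := by simpa [hS'] using hj
      exact hS j this
    · intro x _ y _ h
      have h : r + (x : ℕ) = r + y := h
      ext; omega
  set R' : Finset (Fin p) := Finset.univ.filter (fun u => (u : ℕ) ∈ R) with hR'
  have hc2 : R.card ≤ R'.card := by
    have : R ⊆ R'.image (fun u : Fin p => (u : ℕ)) := by
      intro u hu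
      simp only [Finset.mem_image]
      exact ⟨⟨u, hR u hu⟩, by simpa [hR'] using hu, rfl⟩
    exact (Finset.card_le_card this).trans Finset.card_image_le
  obtain ⟨R'', hsub, hcard''⟩ := Finset.exists_subset_card_eq (hc1.trans (hcard.trans hc2))
  have hdet := hC S'.card (R''.orderEmbOfFin hcard'') (S'.orderEmbOfFin rfl)
    (R''.orderEmbOfFin hcard'').injective (S'.orderEmbOfFin rfl).injective
  have hz := Matrix.eq_zero_of_mulVec_eq_zero hdet
    (v := fun i => d (S'.orderEmbOfFin rfl i)) (by
      ext i
      have hmem : R''.orderEmbOfFin hcard'' i ∈ R' := hsub (Finset.orderEmbOfFin_mem _ _ i)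
      have h1 := heq (R''.orderEmbOfFin hcard'' i) (by simpa [hR'] using hmem)
      simp only [Matrix.mulVec, dotProduct, Matrix.submatrix_apply, Pi.zero_apply]
      rw [← h1]
      have h2 : ∑ j, C (R''.orderEmbOfFin hcard'' i) j * d j
          = ∑ j ∈ S', C (R''.orderEmbOfFin hcard'' i) j * d j := by
        symm
        apply Finset.sum_subset (Finset.subset_univ _)
        intro j _ hj
        have : d j = 0 := by simpa [hS'] using hj
        simp [this]
      rw [h2, ← Finset.sum_coe_sort S']
      exact Fintype.sum_equiv (S'.orderIsoOfFin rfl).toEquiv _ _ (fun x => by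
        simp [Finset.coe_orderIsoOfFin_apply]))
  intro j
  by_contra hj
  have hjS : j ∈ S' := by simpa [hS'] using hj
  have h3 := congrFun hz ((S'.orderIsoOfFin rfl).symm ⟨j, hjS⟩)
  have h4 : S'.orderEmbOfFin rfl ((S'.orderIsoOfFin rfl).symm ⟨j, hjS⟩) = j := by
    rw [← Finset.coe_orderIsoOfFin_apply]; simp
  simp only [h4, Pi.zero_apply] at h3
  exact hj h3

theorem aux_Z {F : Type*} [Field F] {a : ℕ} (Z : Matrix (Fin a) (Fin (2 * a)) F)
    (hZMDS : ∀ cols : Finset (Fin (2 * a)), cols.card = a →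
        LinearIndependent F (fun j : cols => fun u => Z u (j : Fin (2 * a))))
    (Z1 Z2 : Matrix (Fin a) (Fin a) F)
    (hZ1 : ∀ (i j : Fin a) (k : Fin (2 * a)), (k : ℕ) = j → Z1 i j = Z i k)
    (hZ2 : ∀ (i j : Fin a) (k : Fin (2 * a)), (k : ℕ) = a + j → Z2 i j = Z i k)
    (w1 w2 : ℕ → F) (S : Finset ℕ) (hS : S.card ≤ a)
    (h1 : ∀ q, q < a → w1 q ≠ 0 → q ∈ S) (h2 : ∀ q, q < a → w2 q ≠ 0 → a + q ∈ S)
    (heq : ∀ u : Fin a, ∑ q : Fin a, Z1 u q * w1 q + ∑ q : Fin a, Z2 u q * w2 q = 0) :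
    ∀ q, q < a → w1 q = 0 ∧ w2 q = 0 := by
  classical
  set w : Fin (2 * a) → F := fun k => if (k : ℕ) < a then w1 k else w2 (k - a) with hw
  set S' : Finset (Fin (2 * a)) := Finset.univ.filter (fun j => w j ≠ 0) with hS'
  have hc1 : S'.card ≤ S.card := by
    apply Finset.card_le_card_of_injOn (fun j : Fin (2 * a) => (j : ℕ))
    · intro j hj
      have hj' : w j ≠ 0 := by simpa [hS'] using hj
      have hlt := j.isLt
      by_cases hja : (j : ℕ) < a
      · exact h1 j hja (by simpa [hw, hja] using hj')
      · have := h2 (j - a) (by omega) (by simpa [hw, hja] using hj')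
        have e : a + ((j : ℕ) - a) = j := by omega
        rw [e] at this
        exact this
    · intro x _ y _ h
      exact Fin.ext h
  obtain ⟨cols, hsub, hcc⟩ := Finset.exists_superset_card_eq (s := S') (n := a)
    (hc1.trans hS) (by simp; omega)
  have hli := hZMDS cols hcc
  rw [Fintype.linearIndependent_iff] at hli
  have hz := hli (fun j => w j) (by
    ext u
    simp only [Finset.sum_apply, Pi.smul_apply, smul_eq_mul, Pi.zero_apply]
    rw [Finset.sum_coe_sort cols (fun j => w j * Z u j)]
    have e1 : ∑ j ∈ cols, w j * Z u j = ∑ j, w j * Z u j := by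
      apply Finset.sum_subset (Finset.subset_univ _)
      intro j _ hj
      have : w j = 0 := by
        by_contra h
        exact hj (hsub (by simpa [hS'] using h))
      simp [this]
    rw [e1, ← heq u, ← (finCongr (two_mul a).symm).sum_comp, Fin.sum_univ_add]
    congr 1
    · apply Finset.sum_congr rfl
      intro q _
      rw [hZ1 u q (finCongr (two_mul a).symm (Fin.castAdd a q)) (by simp), mul_comm]
      congr 1
      simp [hw]
    · apply Finset.sum_congr rfl
      intro q _
      rw [hZ2 u q (finCongr (two_mul a).symm (Fin.natAdd a q)) (by simp [add_comm]), mul_comm]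
      congr 1
      simp [hw])
  have hall : ∀ k, w k = 0 := by
    intro k
    by_contra h
    exact h (hz ⟨k, hsub (by simpa [hS'] using h)⟩)
  intro q hq
  refine ⟨?_, ?_⟩
  · have := hall ⟨q, by omega⟩
    simpa [hw, hq] using this
  · have := hall ⟨a + q, by omega⟩
    simpa [hw] using this

theorem aux_core_s13 {F : Type*} [Field F] (a b ρ ℓ : ℕ)
    (ha : 0 < a) (hab : a ≤ b) (hb : b = ℓ * a) (hρ : a + b ≤ ρ)
    (Z : Matrix (Fin a) (Fin (2 * a)) F)
    (hZMDS : ∀ cols : Finset (Fin (2 * a)), cols.card = a →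
        LinearIndependent F (fun j : cols => fun u => Z u (j : Fin (2 * a))))
    (Z1 Z2 : Matrix (Fin a) (Fin a) F)
    (hZ1 : ∀ (i j : Fin a) (k : Fin (2 * a)), (k : ℕ) = j → Z1 i j = Z i k)
    (hZ2 : ∀ (i j : Fin a) (k : Fin (2 * a)), (k : ℕ) = a + j → Z2 i j = Z i k)
    (hlow : ∀ u q : Fin a, u < q → Z1 u q = 0)
    (hupp : ∀ u q : Fin a, q < u → Z2 u q = 0)
    (C : Matrix (Fin (ℓ * a)) (Fin (ρ - ℓ * a)) F)
    (hC : ∀ (s : ℕ) (ri : Fin s → Fin (ℓ * a)) (ci : Fin s → Fin (ρ - ℓ * a)),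
        Function.Injective ri → Function.Injective ci →
        (C.submatrix ri ci).det ≠ 0)
    (c : ℕ → F)
    (eq0 : ∀ u : Fin (ℓ * a), (u : ℕ) < a → c u + ∑ j, C u j * c (b + (j : ℕ)) = 0)
    (eq1 : ∀ u : Fin (ℓ * a), a ≤ (u : ℕ) →
      ∑ q : Fin a, Z1 ⟨u % a, Nat.mod_lt _ ha⟩ q * c (u / a * a + q)
      + ∑ j, C u j * c (b + (j : ℕ))
      + ∑ q : Fin a, Z2 ⟨u % a, Nat.mod_lt _ ha⟩ q * c (ρ + (u / a - 1) * a + q) = 0)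
    (i : ℕ) (hi : i < ρ - a + b) (T : Finset ℕ)
    (hsupp : ∀ j, j < ρ - a + b → c j ≠ 0 → i ≤ j ∧ (j ∈ T ∨ i + ρ ≤ j))
    (hT : T.card ≤ a ∨ ∀ j ∈ T, j < i + b) : c i = 0 := by
  classical
  -- combining C-part zero with a row block m
  have block : ∀ m, 1 ≤ m → m < ℓ → (∀ j : Fin (ρ - ℓ * a), c (b + (j : ℕ)) = 0) →
      ∀ S : Finset ℕ, S.card ≤ a → (∀ q, q < a → c (m * a + q) ≠ 0 → q ∈ S) →
      (∀ q, q < a → c (ρ + (m - 1) * a + q) ≠ 0 → a + q ∈ S) →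
      ∀ q, q < a → c (m * a + q) = 0 ∧ c (ρ + (m - 1) * a + q) = 0 := by
    intro m hm1 hml hc S hS h1 h2
    apply aux_Z Z hZMDS Z1 Z2 hZ1 hZ2 (fun q => c (m * a + q))
      (fun q => c (ρ + (m - 1) * a + q)) S hS h1 h2
    intro u
    have hlt : m * a + u < ℓ * a := by
      have := u.isLt
      nlinarith
    have hge : a ≤ m * a + u := by nlinarith
    have h := eq1 ⟨m * a + u, hlt⟩ hge
    have e1 : (m * a + (u : ℕ)) % a = u := by
      rw [add_comm, Nat.add_mul_mod_self_right, Nat.mod_eq_of_lt u.isLt]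
    have e2 : (m * a + (u : ℕ)) / a = m := by
      rw [add_comm, Nat.add_mul_div_right _ _ ha, Nat.div_eq_of_lt u.isLt, zero_add]
    simp only [e1, e2, hc, mul_zero, Finset.sum_const_zero, add_zero] at h
    exact h
  have eqC : ∀ u : Fin (ℓ * a), a ≤ (u : ℕ) →
      (∀ q, q < a → q ≤ u % a → c (u / a * a + q) = 0) →
      (∀ q, q < a → u % a ≤ q → c (ρ + (u / a - 1) * a + q) = 0) →
      ∑ j, C u j * c (b + (j : ℕ)) = 0 := by
    intro u hu h1 h2
    have h := eq1 u hu
    rw [Finset.sum_eq_zero, Finset.sum_eq_zero (s := (Finset.univ : Finset (Fin a)))] at h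
    · simpa using h
    · intro q _
      by_cases hq : (u : ℕ) % a ≤ q
      · rw [h2 q q.isLt hq, mul_zero]
      · rw [hupp _ _ (by simpa [Fin.lt_def] using hq), zero_mul]
    · intro q _
      by_cases hq : (q : ℕ) ≤ u % a
      · rw [h1 q q.isLt hq, mul_zero]
      · rw [hlow _ _ (by simpa [Fin.lt_def] using hq), zero_mul]
  have zlt : ∀ j, j < i → c j = 0 := by
    intro j hj
    by_contra h
    have := hsupp j (by omega) h
    omega
  have hdm : i / a * a + i % a = i := Nat.div_add_mod' i a
  have hml : i % a < a := Nat.mod_lt _ ha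
  rcases lt_or_ge i ρ with hiρ | hiρ
  swap
  · -- i in the last part
    have hc : ∀ j : Fin (ρ - ℓ * a), c (b + (j : ℕ)) = 0 := fun j => zlt _ (by have := j.isLt; omega)
    have h0 : (i - ρ) / a * a + (i - ρ) % a = i - ρ := Nat.div_add_mod' _ _
    have hlt : (i - ρ) / a + 1 < ℓ := by
      by_contra hcon
      have : ℓ * a ≤ ((i - ρ) / a + 1) * a := Nat.mul_le_mul_right _ (by omega)
      rw [add_mul] at this
      omega
    have hle : ((i - ρ) / a + 1) * a + a ≤ ℓ * a := by
      have := Nat.mul_le_mul_right a hlt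
      rw [Nat.succ_mul] at this
      omega
    have hx : ((i - ρ) / a + 1) * a = (i - ρ) / a * a + a := Nat.succ_mul _ _
    have hx' : ((i - ρ) / a + 1 - 1) * a = (i - ρ) / a * a := by rw [Nat.add_sub_cancel]
    have h := block ((i - ρ) / a + 1) (Nat.le_add_left _ _) hlt hc (Finset.Ico a (2 * a)) (by simp; omega)
      (fun q hq hne => (hne (zlt _ (by omega))).elim)
      (fun q hq hne => by simp; omega) ((i - ρ) % a) (Nat.mod_lt _ ha)
    have e : ρ + ((i - ρ) / a + 1 - 1) * a + (i - ρ) % a = i := by omega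
    rw [e] at h
    exact h.2
  have hsC : ∀ j : Fin (ρ - ℓ * a), c (b + (j : ℕ)) ≠ 0 → i ≤ b + j ∧ b + (j : ℕ) ∈ T := by
    intro j hj
    have hjl := j.isLt
    have := hsupp (b + j) (by omega) hj
    refine ⟨this.1, this.2.resolve_right (by omega)⟩
  rcases lt_or_ge i a with hia | hia
  · -- i in the identity part
    have hc : ∀ j : Fin (ρ - ℓ * a), c (b + (j : ℕ)) = 0 := by
      rcases hT with hT | hT
      · apply aux_C C hC b (fun j => c (b + (j : ℕ))) (T.filter (fun j => ¬ j < a))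
          (Finset.range a \ T.filter (fun j => j < a))
        · have h1 := Finset.card_filter_add_card_filter_not (s := T) (fun j => j < a)
          have h2 := Finset.le_card_sdiff (T.filter (fun j => j < a)) (Finset.range a)
          rw [Finset.card_range] at h2
          omega
        · intro u hu
          simp at hu
          omega
        · intro j hj
          have := (hsC j hj).2
          simp only [Finset.mem_filter]
          exact ⟨this, by omega⟩
        · intro u hu
          simp only [Finset.mem_sdiff, Finset.mem_range, Finset.mem_filter, not_and] at hu
          have h := eq0 u hu.1
          have hz : c u = 0 := by
            by_contra hne
            have := hsupp u (by omega) hne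
            have : (u : ℕ) ∈ T := this.2.resolve_right (by omega)
            exact hu.2 this hu.1
          simpa [hz] using h
      · apply aux_C C hC b (fun j => c (b + (j : ℕ))) (Finset.Ico b (i + b)) (Finset.range i)
        · simp
        · intro u hu
          simp at hu
          omega
        · intro j hj
          have := hT _ (hsC j hj).2
          simp; omega
        · intro u hu
          simp only [Finset.mem_range] at hu
          have h := eq0 u (by omega)
          simpa [zlt u hu] using h
    have h := eq0 ⟨i, by omega⟩ hia
    simpa [hc] using h
  -- now a ≤ i < ρ
  have eq0' : ∀ u : Fin (ℓ * a), (u : ℕ) < a → ∑ j, C u j * c (b + (j : ℕ)) = 0 := by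
    intro u hu
    have h := eq0 u hu
    simpa [zlt u (by omega)] using h
  have hc : ∀ j : Fin (ρ - ℓ * a), c (b + (j : ℕ)) = 0 := by
    rcases hT with hT | hT
    · apply aux_C C hC b (fun j => c (b + (j : ℕ))) T (Finset.range a)
      · simpa using hT
      · intro u hu
        simp at hu
        omega
      · intro j hj
        exact (hsC j hj).2
      · intro u hu
        exact eq0' u (by simpa using hu)
    · rcases lt_or_ge i b with hib | hib
      · apply aux_C C hC b (fun j => c (b + (j : ℕ))) (Finset.Ico b (min ρ (i + b)))
          (Finset.range a ∪ Finset.Ico (a + (i + b - ρ)) i)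
        · rw [Finset.card_union_of_disjoint]
          · simp; omega
          · rw [Finset.disjoint_left]; intro x; simp; omega
        · intro u hu
          simp at hu
          omega
        · intro j hj
          have := hT _ (hsC j hj).2
          have := j.isLt
          simp; omega
        · intro u hu
          rcases lt_or_ge (u : ℕ) a with hua | hua
          · exact eq0' u hua
          · simp only [Finset.mem_union, Finset.mem_range, Finset.mem_Ico] at hu
            have hu' := hu.resolve_left (by omega)
            have hd : (u : ℕ) / a * a + u % a = u := Nat.div_add_mod' _ _
            have hpos : 1 ≤ (u : ℕ) / a := (Nat.one_le_div_iff ha).2 hua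
            have hd2 : ((u : ℕ) / a - 1) * a + a = u / a * a := by
              rw [← Nat.succ_mul]; congr 1; omega
            have hd3 : (u : ℕ) / a * a + a ≤ ℓ * a := by
              rw [← Nat.succ_mul]
              exact Nat.mul_le_mul_right _ ((Nat.div_lt_iff_lt_mul ha).2 u.isLt)
            apply eqC u hua
            · intro q _ hq
              exact zlt _ (by omega)
            · intro q hq hq2
              by_contra hne
              have := hsupp _ (by omega) hne
              rcases this.2 with h | h
              · have := hT _ h; omega
              · omega
      · apply aux_C C hC b (fun j => c (b + (j : ℕ))) (Finset.Ico i (min ρ (i + b)))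
          (Finset.range a ∪ Finset.Ico (min (a + (i + b - ρ)) b) b)
        · rw [Finset.card_union_of_disjoint]
          · simp; omega
          · rw [Finset.disjoint_left]; intro x; simp; omega
        · intro u hu
          simp at hu
          omega
        · intro j hj
          have := hT _ (hsC j hj).2
          have := (hsC j hj).1
          have := j.isLt
          simp; omega
        · intro u hu
          rcases lt_or_ge (u : ℕ) a with hua | hua
          · exact eq0' u hua
          · simp only [Finset.mem_union, Finset.mem_range, Finset.mem_Ico] at hu
            have hu' := hu.resolve_left (by omega)
            have hul := u.isLt
            have hd : (u : ℕ) / a * a + u % a = u := Nat.div_add_mod' _ _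
            have hpos : 1 ≤ (u : ℕ) / a := (Nat.one_le_div_iff ha).2 hua
            have hd2 : ((u : ℕ) / a - 1) * a + a = u / a * a := by
              rw [← Nat.succ_mul]; congr 1; omega
            have hd3 : (u : ℕ) / a * a + a ≤ ℓ * a := by
              rw [← Nat.succ_mul]
              exact Nat.mul_le_mul_right _ ((Nat.div_lt_iff_lt_mul ha).2 hul)
            have hm := Nat.mod_lt (u : ℕ) ha
            apply eqC u hua
            · intro q _ hq
              exact zlt _ (by omega)
            · intro q hq hq2
              by_contra hne
              have := hsupp _ (by omega) hne
              rcases this.2 with h | h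
              · have := hT _ h; omega
              · omega
  rcases lt_or_ge i b with hib | hib
  swap
  · have := hc ⟨i - b, by omega⟩
    simpa [Nat.add_sub_cancel' hib] using this
  have hpos : 1 ≤ i / a := (Nat.one_le_div_iff ha).2 hia
  have hd2 : (i / a - 1) * a + a = i / a * a := by
    rw [← Nat.succ_mul]; congr 1; omega
  have hlt : i / a < ℓ := (Nat.div_lt_iff_lt_mul ha).2 (by omega)
  have hd3 : i / a * a + a ≤ ℓ * a := by
    rw [← Nat.succ_mul]
    exact Nat.mul_le_mul_right _ hlt
  have key : ∃ S : Finset ℕ, S.card ≤ a ∧ (∀ q, q < a → c (i / a * a + q) ≠ 0 → q ∈ S) ∧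
      (∀ q, q < a → c (ρ + (i / a - 1) * a + q) ≠ 0 → a + q ∈ S) := by
    rcases hT with hT | hT
    · refine ⟨T.image (fun j => if j < ρ then j - i / a * a
        else a + (j - (ρ + (i / a - 1) * a))), Finset.card_image_le.trans hT, ?_, ?_⟩
      · intro q hq hne
        have := (hsupp _ (by omega) hne).2.resolve_right (by omega)
        simp only [Finset.mem_image]
        refine ⟨_, this, ?_⟩
        rw [if_pos (by omega)]
        omega
      · intro q hq hne
        have := (hsupp _ (by omega) hne).2.resolve_right (by omega)
        simp only [Finset.mem_image]
        refine ⟨_, this, ?_⟩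
        rw [if_neg (by omega)]
        omega
    · refine ⟨Finset.Ico (i % a) (a + i % a), by simp, ?_, ?_⟩
      · intro q hq hne
        have := (hsupp _ (by omega) hne).1
        simp; omega
      · intro q hq hne
        have := (hsupp _ (by omega) hne).2.resolve_right (by omega)
        have := hT _ this
        simp; omega
  obtain ⟨S, hS, h1, h2⟩ := key
  have h := (block (i / a) hpos hlt hc S hS h1 h2 (i % a) hml).1
  rwa [hdm] at h

theorem aux_sum_block {F : Type*} [AddCommMonoid F] (a : ℕ) (ha : 0 < a) (f : ℕ → F) (m L : ℕ)
    (hm : m < L) :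
    ∑ v ∈ Finset.range (L * a), (if m = v / a then f v else 0) = ∑ q : Fin a, f (m * a + q) := by
  classical
  rw [← Finset.sum_filter]
  symm
  apply Finset.sum_bij (fun (q : Fin a) _ => m * a + (q : ℕ))
  · intro q _
    have e2 : (m * a + (q : ℕ)) / a = m := by
      rw [add_comm, Nat.add_mul_div_right _ _ ha, Nat.div_eq_of_lt q.isLt, zero_add]
    have := q.isLt
    simp only [Finset.mem_filter, Finset.mem_range]
    refine ⟨by nlinarith, e2.symm⟩
  · intro x _ y _ h
    ext; omega
  · intro v hv
    simp only [Finset.mem_filter, Finset.mem_range] at hv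
    refine ⟨⟨v % a, Nat.mod_lt _ ha⟩, Finset.mem_univ _, ?_⟩
    simp only
    rw [hv.2]
    exact Nat.div_add_mod' _ _
  · intros; rfl

theorem aux_rows {F : Type*} [Field F] (a ℓ ρ : ℕ) (ha : 0 < a) (hl : 1 ≤ ℓ) (hρ : a + ℓ * a ≤ ρ)
    (Z1 Z2 : Matrix (Fin a) (Fin a) F)
    (C : Matrix (Fin (ℓ * a)) (Fin (ρ - ℓ * a)) F) (c : ℕ → F)
    (h : (constructionOneH F a ℓ ρ ha Z1 Z2 C).mulVec (fun i => c i) = 0) (u : Fin (ℓ * a)) :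
    (if (u : ℕ) < a then c u
      else ∑ q : Fin a, Z1 ⟨u % a, Nat.mod_lt _ ha⟩ q * c (u / a * a + q))
      + ∑ j, C u j * c (ℓ * a + (j : ℕ))
      + (if (u : ℕ) < a then 0 else
        ∑ q : Fin a, Z2 ⟨u % a, Nat.mod_lt _ ha⟩ q * c (ρ + (u / a - 1) * a + q)) = 0 := by
  classical
  have hu := congrFun h u
  have hla : a ≤ ℓ * a := Nat.le_mul_of_pos_left a hl
  have hul : (u : ℕ) / a < ℓ := (Nat.div_lt_iff_lt_mul ha).2 u.isLt
  have hsub : (ℓ - 1) * a + a = ℓ * a := by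
    rw [← Nat.succ_mul]; congr 1; omega
  have hn : ℓ * a + (ρ - ℓ * a) + (ℓ - 1) * a = ρ - a + ℓ * a := by omega
  simp only [Matrix.mulVec, dotProduct, Pi.zero_apply] at hu
  rw [← (finCongr hn).sum_comp, Fin.sum_univ_add, Fin.sum_univ_add] at hu
  refine Eq.trans ?_ hu
  have hdiv : (u : ℕ) < a ↔ (u : ℕ) / a = 0 := by
    rw [Nat.div_eq_zero_iff]; omega
  congr 1
  · congr 1
    · -- first part
      split_ifs with hua
      · symm
        rw [Finset.sum_eq_single u]
        · simp [constructionOneH, hua]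
        · intro v _ hv
          have hv' : (u : ℕ) ≠ v := fun h => hv (Fin.ext h.symm)
          by_cases h1 : (u : ℕ) / a = (v : ℕ) / a
          · have : (v : ℕ) < a := by
              rw [hdiv.1 hua] at h1
              have := (Nat.div_eq_zero_iff (a := (v : ℕ)) (b := a)).1 h1.symm
              omega
            simp [constructionOneH, this, hv']
          · simp [constructionOneH, h1]
        · simp
      · symm
        have hb := aux_sum_block a ha
          (fun v => Z1 ⟨u % a, Nat.mod_lt _ ha⟩ ⟨v % a, Nat.mod_lt _ ha⟩ * c v) (u / a) ℓ hul
        rw [← Fin.sum_univ_eq_sum_range (fun v => if (u : ℕ) / a = v / a then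
          Z1 ⟨u % a, Nat.mod_lt _ ha⟩ ⟨v % a, Nat.mod_lt _ ha⟩ * c v else 0)] at hb
        refine Eq.trans ?_ (hb.trans ?_)
        · apply Finset.sum_congr rfl
          intro v _
          by_cases h1 : (u : ℕ) / a = (v : ℕ) / a
          · have : ¬ (v : ℕ) < a := by
              intro hv
              rw [Nat.div_eq_of_lt hv] at h1
              exact hua (hdiv.2 h1)
            simp [constructionOneH, this, h1]
          · simp [constructionOneH, h1]
        · apply Finset.sum_congr rfl
          intro q _
          have e1 : ((u : ℕ) / a * a + (q : ℕ)) % a = q := by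
            rw [add_comm, Nat.add_mul_mod_self_right, Nat.mod_eq_of_lt q.isLt]
          simp only [e1]
    · apply Finset.sum_congr rfl
      intro j _
      have := j.isLt
      have h2 : ℓ * a + (j : ℕ) < ρ := by omega
      simp [constructionOneH, h2]
  · have key : ∀ v : Fin ((ℓ - 1) * a),
        constructionOneH F a ℓ ρ ha Z1 Z2 C u
          ((finCongr hn) (Fin.natAdd (ℓ * a + (ρ - ℓ * a)) v)) *
          c ((finCongr hn) (Fin.natAdd (ℓ * a + (ρ - ℓ * a)) v) : Fin _)
        = if (u : ℕ) / a = (v : ℕ) / a + 1 then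
          Z2 ⟨u % a, Nat.mod_lt _ ha⟩ ⟨v % a, Nat.mod_lt _ ha⟩ * c (ρ + v) else 0 := by
      intro v
      have e : ℓ * a + (ρ - ℓ * a) = ρ := by omega
      have h2 : ¬ ρ + (v : ℕ) < ℓ * a := by omega
      by_cases h1 : (u : ℕ) / a = (v : ℕ) / a + 1
      · simp [constructionOneH, h1, e, h2]
      · simp [constructionOneH, h1, e, h2]
    rw [Finset.sum_congr rfl (fun v _ => key v)]
    split_ifs with hua
    · symm
      apply Finset.sum_eq_zero
      intro v _
      rw [if_neg]
      rw [hdiv.1 hua]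
      exact (Nat.succ_ne_zero _).symm
    · have hpos : 1 ≤ (u : ℕ) / a := (Nat.one_le_div_iff ha).2 (by omega)
      have hb := aux_sum_block a ha
          (fun v => Z2 ⟨u % a, Nat.mod_lt _ ha⟩ ⟨v % a, Nat.mod_lt _ ha⟩ * c (ρ + v))
          (u / a - 1) (ℓ - 1) (by omega)
      rw [← Fin.sum_univ_eq_sum_range (fun v => if (u : ℕ) / a - 1 = v / a then
          Z2 ⟨u % a, Nat.mod_lt _ ha⟩ ⟨v % a, Nat.mod_lt _ ha⟩ * c (ρ + v) else 0)] at hb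
      symm
      refine Eq.trans ?_ (hb.trans ?_)
      · apply Finset.sum_congr rfl
        intro v _
        by_cases h1 : (u : ℕ) / a = (v : ℕ) / a + 1
        · rw [if_pos h1, if_pos (by omega)]
        · rw [if_neg h1, if_neg (by omega)]
      · apply Finset.sum_congr rfl
        intro q _
        have e1 : (((u : ℕ) / a - 1) * a + (q : ℕ)) % a = q := by
          rw [add_comm, Nat.add_mul_mod_self_right, Nat.mod_eq_of_lt q.isLt]
        simp only [e1, add_assoc]

/-- For `a | b` (`b = ℓa`) and `τ+1 ≥ a+b`, the diagonal
embedding (SDE with `N = n` and `S = {0,…,n−1}`) of the code `C_{a,b,τ+1}`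
of Construction 1 (with `ρ = τ+1`, `r = b`, `n = τ+1−a+b`, `k = τ+1−a`) is an
`(a,b,τ)` streaming code of optimal rate `(τ+1−a)/(τ+1−a+b)`. -/
theorem de_constructionOne_is_streaming_code
    (F : Type*) [Field F] (a b τ ℓ : ℕ)
    (ha : 0 < a) (hab : a ≤ b) (hbτ : b ≤ τ)
    (hb : b = ℓ * a) (hτab : a + b ≤ τ + 1)
    (Z : Matrix (Fin a) (Fin (2 * a)) F)
    (hZband : ∀ (i : Fin a) (j : Fin (2 * a)),
        (∃ s : ℕ, 1 ≤ s ∧ s ≤ a - 1 ∧ (j : ℕ) = ((i : ℕ) + s) % (2 * a)) → Z i j = 0)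
    (hZMDS : ∀ cols : Finset (Fin (2 * a)), cols.card = a →
        LinearIndependent F (fun j : cols => fun u => Z u (j : Fin (2 * a))))
    (Z1 Z2 : Matrix (Fin a) (Fin a) F)
    (hZ1 : ∀ (i j : Fin a), Z1 i j = Z i ⟨(j : ℕ), by have := j.isLt; omega⟩)
    (hZ2 : ∀ (i j : Fin a), Z2 i j = Z i ⟨a + (j : ℕ), by have := j.isLt; omega⟩)
    (C : Matrix (Fin (ℓ * a)) (Fin (τ + 1 - ℓ * a)) F)
    (hC : ∀ (s : ℕ) (ri : Fin s → Fin (ℓ * a)) (ci : Fin s → Fin (τ + 1 - ℓ * a)),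
        Function.Injective ri → Function.Injective ci →
        (C.submatrix ri ci).det ≠ 0) :
    -- the diagonal embedding of ker H is an (a,b,τ) streaming code
    (∀ (t : ℤ) (E : Finset ℤ), (↑E ⊆ Set.Icc t (t + (τ : ℤ))) → t ∈ E →
        (E.card ≤ a ∨ ∀ e ∈ E, e ≤ t + (b : ℤ) - 1) →
        ∀ x y : ℤ → (Fin (τ + 1 - a + ℓ * a) → F),
          (∀ s : ℤ,
              (constructionOneH F a ℓ (τ + 1) ha Z1 Z2 C).mulVec
                (fun i => x (s + ((i : ℕ) : ℤ)) i) = 0) →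
          (∀ s : ℤ,
              (constructionOneH F a ℓ (τ + 1) ha Z1 Z2 C).mulVec
                (fun i => y (s + ((i : ℕ) : ℤ)) i) = 0) →
          (∀ t' : ℤ, t' < t → x t' = y t') →
          (∀ t' : ℤ, t' ∈ Set.Icc t (t + (τ : ℤ)) → t' ∉ E → x t' = y t') →
          x t = y t)
    ∧
    -- the rate k/n is the optimal rate (τ+1−a)/(τ+1−a+b)
    ((τ + 1 - a : ℕ) : ℚ) / ((τ + 1 - a + ℓ * a : ℕ) : ℚ)
      = ((τ + 1 - a : ℕ) : ℚ) / ((τ + 1 - a + b : ℕ) : ℚ) := by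
  refine ⟨?_, by rw [hb]⟩
  intro t E hE htE hEc x y hx hy hpast hfut
  have hl : 1 ≤ ℓ := by
    rcases Nat.eq_zero_or_pos ℓ with h | h
    · subst h; simp at hb; omega
    · exact h
  funext i
  let c : ℕ → F := fun j =>
    if h : j < τ + 1 - a + ℓ * a then x (t - (i : ℕ) + j) ⟨j, h⟩ - y (t - (i : ℕ) + j) ⟨j, h⟩ else 0
  have hcH : (constructionOneH F a ℓ (τ + 1) ha Z1 Z2 C).mulVec (fun k => c k) = 0 := by
    have e : (fun k : Fin (τ + 1 - a + ℓ * a) => c k) = (fun k : Fin (τ + 1 - a + ℓ * a) => x (t - (i : ℕ) + ((k : ℕ) : ℤ)) k)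
        - (fun k : Fin (τ + 1 - a + ℓ * a) => y (t - (i : ℕ) + ((k : ℕ) : ℤ)) k) := by
      funext k
      simp [c]
    rw [e, Matrix.mulVec_sub, hx, hy, sub_zero]
  have rows := aux_rows a ℓ (τ + 1) ha hl (by omega) Z1 Z2 C c hcH
  have hin := i.isLt
  have hmain : c i = 0 := by
    apply aux_core_s13 a b (τ + 1) ℓ ha hab hb hτab Z hZMDS Z1 Z2
      (fun i j k hk => (hZ1 i j).trans (congrArg (Z i) (Fin.ext hk.symm)))
      (fun i j k hk => (hZ2 i j).trans (congrArg (Z i) (Fin.ext hk.symm))) ?_ ?_ C hC c ?_ ?_ i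
      (by omega) (E.image (fun e => (e - t + (i : ℕ)).toNat)) ?_ ?_
    · intro u q huq
      have huq' : (u : ℕ) < q := huq
      have := q.isLt
      rw [hZ1]
      apply hZband
      refine ⟨(q : ℕ) - u, by omega, by omega, ?_⟩
      rw [Nat.mod_eq_of_lt (by omega)]
      simp only
      omega
    · intro u q huq
      have huq' : (q : ℕ) < u := huq
      have := u.isLt
      rw [hZ2]
      apply hZband
      refine ⟨a + (q : ℕ) - u, by omega, by omega, ?_⟩
      rw [Nat.mod_eq_of_lt (by omega)]
      simp only
      omega
    · intro u hu
      have h := rows u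
      rw [if_pos hu, if_pos hu, add_zero] at h
      rw [hb]
      exact h
    · intro u hu
      have h := rows u
      rw [if_neg (by omega), if_neg (by omega)] at h
      rw [hb]
      exact h
    · intro j hj hne
      have hjn : j < τ + 1 - a + ℓ * a := by omega
      have hne' : x (t - (i : ℕ) + j) ≠ y (t - (i : ℕ) + j) := by
        intro h
        apply hne
        simp [c, h]
      have h1 : (i : ℕ) ≤ j := by
        by_contra hlt
        exact hne' (hpast _ (by omega))
      refine ⟨h1, ?_⟩
      by_contra hcon
      simp only [not_or, Finset.mem_image, not_exists, not_and] at hcon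
      apply hne'
      apply hfut
      · simp only [Set.mem_Icc]
        omega
      · intro hmem
        exact hcon.1 _ hmem (by omega)
    · rcases hEc with h | h
      · exact Or.inl (Finset.card_image_le.trans h)
      · right
        intro j hj
        simp only [Finset.mem_image] at hj
        obtain ⟨e, he, rfl⟩ := hj
        have := h e he
        have := (hE he).1
        omega
  have h2 : c i = x t i - y t i := by
    have e : t - ((i : ℕ) : ℤ) + ((i : ℕ) : ℤ) = t := by ring
    simp [c]
  rw [h2] at hmain
  exact sub_eq_zero.1 hmain
end

section
/- Let a ≤ b ≤ τ be positive integers with b = ℓa + (a−1) for some integer ℓ ≥ 1 (i.e., b mod a = a−1) and τ + 1 − a ≥ b, and set n = τ+1−a+b, k = τ+1−a. Let F be a field, Z = [Z1 | Z2] an a×2a zero-band MDS generator matrix over F, C a b×(τ+1−b) super-regular matrix over F, and H the b×n parity-check matrix of the code C^I_{a,b,τ+1} of Construction 2. Then the diagonal embedding of ker H (i.e., SDE(ker H, S) with N = n and S = {0,1,…,n−1}) is an (a,b,τ) streaming code, and its rate k/n equals the optimal rate (τ+1−a)/(τ+1−a+b). -/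
/-- The parity-check matrix `H` of the code `C^I_{a,b,τ+1}` of Construction 2
(`b = ℓa + a − 1`): `H(0:a−2, 0:a−2) = I_{a−1}`;
`H(ia−1:ia+a−2, ia−1:ia+a−2) = Z1` for `i ∈ {1,…,ℓ}`; `H(0:b−1, b:τ) = C`;
`H(a−1:2a−3, τ+1:τ+a−1) = Z2* = Z2(0:a−2, 0:a−2)`;
`H(ia−1:(i+1)a−2, τ+(i−1)a:τ+ia−1) = Z2` for `i ∈ {2,…,ℓ}`; all other entries
zero. -/
def constructionTwoH (F : Type*) [Field F] (a b τ : ℕ) (ha : 0 < a)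
    (Z1 Z2 : Matrix (Fin a) (Fin a) F)
    (C : Matrix (Fin b) (Fin (τ + 1 - b)) F) :
    Matrix (Fin b) (Fin (τ + 1 - a + b)) F :=
  Matrix.of fun u v =>
    if hv1 : (v : ℕ) < a - 1 then (if (u : ℕ) = (v : ℕ) then 1 else 0)
    else if hv2 : (v : ℕ) < b then
      if h : a - 1 ≤ (u : ℕ) ∧ ((u : ℕ) - (a - 1)) / a = ((v : ℕ) - (a - 1)) / a then
        Z1 ⟨((u : ℕ) - (a - 1)) % a, Nat.mod_lt _ ha⟩
           ⟨((v : ℕ) - (a - 1)) % a, Nat.mod_lt _ ha⟩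
      else 0
    else if hv3 : (v : ℕ) ≤ τ then
      C u ⟨(v : ℕ) - b, by omega⟩
    else if hv4 : (v : ℕ) < τ + a then
      if h : a - 1 ≤ (u : ℕ) ∧ (u : ℕ) ≤ 2 * a - 3 then
        Z2 ⟨(u : ℕ) - (a - 1), by omega⟩ ⟨(v : ℕ) - (τ + 1), by omega⟩
      else 0
    else
      if h : a - 1 ≤ (u : ℕ) ∧ ((u : ℕ) - (a - 1)) / a = ((v : ℕ) - τ - a) / a + 1 then
        Z2 ⟨((u : ℕ) - (a - 1)) % a, Nat.mod_lt _ ha⟩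
           ⟨((v : ℕ) - τ) % a, Nat.mod_lt _ ha⟩
      else 0

namespace CTwo
open Finset

variable {F : Type*} [Field F]

/-- `Z`-part unknowns from the right half in block `m`. -/
def gpart (a τ : ℕ) (c : ℕ → F) (m d : ℕ) : F :=
  if m = 0 then (if d < a - 1 then c (τ + 1 + d) else 0) else c (τ + m * a + d)

/-- super-regular matrices: few unknown columns, many vanishing rows. -/
theorem c_lemma (b M : ℕ) (C : Matrix (Fin b) (Fin M) F)
    (hC : ∀ (s : ℕ) (ri : Fin s → Fin b) (ci : Fin s → Fin M),
        Function.Injective ri → Function.Injective ci →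
        (C.submatrix ri ci).det ≠ 0)
    (cc : ℕ → ℕ → F) (hcc : ∀ (u : Fin b) (w : Fin M), cc u w = C u w)
    (R Q : Finset ℕ) (hR : ∀ u ∈ R, u < b) (k : ℕ → F)
    (hk : ∀ w < M, w ∉ Q → k w = 0) (hQR : Q.card ≤ R.card)
    (hK : ∀ u ∈ R, ∑ w ∈ range M, cc u w * k w = 0) : ∀ w < M, k w = 0 := by
  set Q' := Q.filter (· < M) with hQ'
  have hc : Q'.card ≤ R.card := (card_filter_le _ _).trans hQR
  obtain ⟨R', hR', hcard⟩ := exists_subset_card_eq hc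
  let ri : Fin Q'.card → Fin b := fun i =>
    ⟨R'.orderEmbOfFin hcard i, hR _ (hR' (orderEmbOfFin_mem R' hcard i))⟩
  let ci : Fin Q'.card → Fin M := fun i =>
    ⟨Q'.orderEmbOfFin rfl i, (mem_filter.1 (orderEmbOfFin_mem Q' rfl i)).2⟩
  have hri : Function.Injective ri := fun x y h => by
    simpa [ri] using h
  have hci : Function.Injective ci := fun x y h => by
    simpa [ci] using h
  have hdet := hC _ ri ci hri hci
  have hv : (C.submatrix ri ci).mulVec (fun i => k (ci i)) = 0 := by
    funext i
    have h0 := hK _ (hR' (orderEmbOfFin_mem R' hcard i))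
    have h1 : ∑ w ∈ range M, cc (ri i) w * k w = ∑ w ∈ Q', cc (ri i) w * k w := by
      symm
      apply sum_subset
      · intro w hw; exact mem_range.2 (mem_filter.1 hw).2
      · intro w hw hn
        rw [hk w (mem_range.1 hw) (fun h => hn (mem_filter.2 ⟨h, mem_range.1 hw⟩)), mul_zero]
    have h2 : ∑ w ∈ Q', cc (ri i) w * k w = ∑ x, cc (ri i) (ci x) * k (ci x) := by
      have : Q' = Finset.univ.map (Q'.orderEmbOfFin rfl).toEmbedding := by
        ext w; simp
      conv_lhs => rw [this]
      rw [sum_map]; rfl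
    simp only [Matrix.mulVec, dotProduct, Matrix.submatrix_apply, Pi.zero_apply]
    rw [← h0]
    change _ = ∑ w ∈ range M, cc (ri i) w * k w
    rw [h1, h2]
    exact sum_congr rfl fun x _ => by rw [hcc]
  have := Matrix.eq_zero_of_mulVec_eq_zero hdet hv
  intro w hw
  by_cases hwQ : w ∈ Q
  · have hw' : w ∈ Q' := mem_filter.2 ⟨hwQ, hw⟩
    have : w ∈ Set.range (Q'.orderEmbOfFin rfl) := by rw [range_orderEmbOfFin]; exact hw'
    obtain ⟨i, rfl⟩ := this
    have h := congrFun ‹(fun i => k (ci i)) = 0› i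
    exact h
  · exact hk w hw hwQ

theorem z_lemma (a : ℕ) (Z : Matrix (Fin a) (Fin (2 * a)) F)
    (hZMDS : ∀ cols : Finset (Fin (2 * a)), cols.card = a →
        LinearIndependent F (fun j : cols => fun u => Z u (j : Fin (2 * a))))
    (W : Fin (2 * a) → F) (P : Finset (Fin (2 * a))) (hP : P.card ≤ a)
    (hW : ∀ d, d ∉ P → W d = 0) (h : ∀ r, ∑ d, Z r d * W d = 0) : W = 0 := by
  obtain ⟨P', hPP, hcard⟩ := exists_superset_card_eq hP (by simp; omega)
  have hli := Fintype.linearIndependent_iff.1 (hZMDS P' hcard) (fun j => W j) (by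
    funext r
    rw [Finset.sum_apply]
    simp only [Pi.smul_apply, smul_eq_mul, Pi.zero_apply]
    rw [← h r, Finset.sum_coe_sort P' (fun j => W j * Z r j)]
    rw [← sum_subset (subset_univ P')]
    · exact sum_congr rfl fun _ _ => mul_comm _ _
    · intro d _ hd
      rw [hW d (fun h => hd (hPP h)), mul_zero])
  funext d
  by_cases hd : d ∈ P'
  · exact hli ⟨d, hd⟩
  · exact hW d (fun h => hd (hPP h))

theorem z_diag (a : ℕ) (Z : Matrix (Fin a) (Fin (2 * a)) F)
    (hZMDS : ∀ cols : Finset (Fin (2 * a)), cols.card = a →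
        LinearIndependent F (fun j : cols => fun u => Z u (j : Fin (2 * a))))
    (r : Fin a) (hz : ∀ d : Fin (2 * a), (r : ℕ) < d → (d : ℕ) < r + a → Z r d = 0) :
    Z r ⟨r, by omega⟩ ≠ 0 := by
  intro h0
  set P : Finset (Fin (2 * a)) := Finset.univ.filter (fun d => (r : ℕ) ≤ d ∧ (d : ℕ) < r + a)
  have hPc : P.card = a := by
    have : P.map Fin.valEmbedding = Finset.Ico (r : ℕ) (r + a) := by
      ext x
      simp only [mem_map, P, mem_filter, mem_univ, true_and, Fin.valEmbedding_apply, mem_Ico]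
      constructor
      · rintro ⟨d, hd, rfl⟩; exact hd
      · intro hx; exact ⟨⟨x, by omega⟩, hx, rfl⟩
    rw [← card_map Fin.valEmbedding, this]; simp
  have hli := hZMDS P hPc
  have hsp := hli.span_eq_top_of_card_eq_finrank' (by simp [hPc])
  have hle : Submodule.span F (Set.range (fun j : P => fun u => Z u (j : Fin (2 * a))))
      ≤ LinearMap.ker (LinearMap.proj r : (Fin a → F) →ₗ[F] F) := by
    rw [Submodule.span_le]
    rintro _ ⟨⟨d, hd⟩, rfl⟩
    simp only [SetLike.mem_coe, LinearMap.mem_ker, LinearMap.proj_apply]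
    have hd' := (mem_filter.1 hd).2
    by_cases hdr : (d : ℕ) = r
    · have : d = ⟨r, by omega⟩ := Fin.ext hdr
      rw [this]; exact h0
    · exact hz d (by omega) hd'.2
  rw [hsp] at hle
  have := hle (Submodule.mem_top (x := fun _ => (1 : F)))
  simp at this

theorem core (a b τ ℓ : ℕ) (ha : 0 < a) (hℓ : 1 ≤ ℓ) (hb : b = ℓ * a + a - 1)
    (hτb : b + a ≤ τ + 1) (z cc : ℕ → ℕ → F)
    (hlow : ∀ r d, r < d → d < a → z r d = 0)
    (hup : ∀ r d, d < r → r < a → z r (a + d) = 0)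
    (hdiag : ∀ r < a, z r r ≠ 0)
    (hZ : ∀ (W₁ W₂ : ℕ → F) (P₁ P₂ : Finset ℕ), P₁.card + P₂.card ≤ a →
      (∀ d < a, d ∉ P₁ → W₁ d = 0) → (∀ d < a, d ∉ P₂ → W₂ d = 0) →
      (∀ r < a, ∑ d ∈ range a, z r d * W₁ d + ∑ d ∈ range a, z r (a + d) * W₂ d = 0) →
      (∀ d < a, W₁ d = 0) ∧ (∀ d < a, W₂ d = 0))
    (hC : ∀ (R Q : Finset ℕ), (∀ u ∈ R, u < b) → ∀ (k : ℕ → F),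
      (∀ w < τ + 1 - b, w ∉ Q → k w = 0) → Q.card ≤ R.card →
      (∀ u ∈ R, ∑ w ∈ range (τ + 1 - b), cc u w * k w = 0) → ∀ w < τ + 1 - b, k w = 0)
    (c : ℕ → F)
    (htop : ∀ u < a - 1, c u + ∑ w ∈ range (τ + 1 - b), cc u w * c (b + w) = 0)
    (hblk : ∀ m < ℓ, ∀ r < a, ∑ d ∈ range a, z r d * c (a - 1 + m * a + d)
      + ∑ w ∈ range (τ + 1 - b), cc (a - 1 + m * a + r) w * c (b + w)
      + ∑ d ∈ range a, z r (a + d) * gpart a τ c m d = 0)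
    (j : ℕ) (hjn : j < τ + ℓ * a) (T : Finset ℕ) (hjT : j ∈ T)
    (hT : T.card ≤ a ∨ ∀ v ∈ T, v < j + b)
    (hlt : ∀ v < j, c v = 0)
    (hsup : ∀ v, v ≤ j + τ → v ∉ T → c v = 0) : c j = 0 := by
  have hℓa : a ≤ ℓ * a := Nat.le_mul_of_pos_left a hℓ
  have hmul : ∀ m < ℓ, m * a + a ≤ ℓ * a := fun m hm => by
    have := Nat.mul_le_mul_right a (Nat.succ_le_of_lt hm)
    rwa [Nat.succ_mul] at this
  have hdec : ∀ u, a - 1 ≤ u → u < b → ∃ m < ℓ, ∃ r < a, u = a - 1 + m * a + r := by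
    intro u h1 h2
    refine ⟨(u - (a - 1)) / a, ?_, (u - (a - 1)) % a, Nat.mod_lt _ ha, ?_⟩
    · rw [Nat.div_lt_iff_lt_mul ha]; omega
    · have := Nat.div_add_mod' (u - (a - 1)) a
      omega
  -- rows that see only `C`
  have hclean : ∀ m < ℓ, ∀ r < a, (∀ d ≤ r, c (a - 1 + m * a + d) = 0) →
      (∀ d < a, r ≤ d → gpart a τ c m d = 0) →
      ∑ w ∈ range (τ + 1 - b), cc (a - 1 + m * a + r) w * c (b + w) = 0 := by
    intro m hm r hr h1 h2
    have h := hblk m hm r hr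
    rw [sum_eq_zero (s := range a) (f := fun d => z r d * c (a - 1 + m * a + d)),
      sum_eq_zero (s := range a) (f := fun d => z r (a + d) * gpart a τ c m d)] at h
    · simpa using h
    · intro d hd
      by_cases hdr : d < r
      · rw [hup r d hdr hr, zero_mul]
      · rw [h2 d (mem_range.1 hd) (by omega), mul_zero]
    · intro d hd
      by_cases hdr : r < d
      · rw [hlow r d hdr (mem_range.1 hd), zero_mul]
      · rw [h1 d (by omega), mul_zero]
  have htop0 : ∀ u < a - 1, c u = 0 →
      ∑ w ∈ range (τ + 1 - b), cc u w * c (b + w) = 0 := by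
    intro u hu h0
    have h := htop u hu
    rwa [h0, zero_add] at h
  -- the `C` coordinates vanish
  have hk : ∀ w < τ + 1 - b, c (b + w) = 0 := by
    rcases hT with hT | hT
    · set T1 := T.filter (· < a - 1) with hT1
      set T2 := T.filter (fun v => a - 1 ≤ v ∧ v < 2 * a - 1) with hT2
      set T3 := T.filter (fun v => b ≤ v) with hT3
      have hcard : T1.card + T2.card + T3.card ≤ a := by
        rw [← card_union_of_disjoint, ← card_union_of_disjoint]
        · refine (card_le_card ?_).trans hT
          intro v hv
          simp only [mem_union, T1, T2, T3, mem_filter] at hv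
          tauto
        · rw [disjoint_left]
          intro v hv hv'
          simp only [mem_union, T1, T2, T3, mem_filter] at hv hv'
          omega
        · rw [disjoint_left]
          intro v hv hv'
          simp only [T1, T2, mem_filter] at hv hv'
          omega
      set Q := T3.image (fun v => v - b) with hQ
      have hQc : Q.card ≤ T3.card := card_image_le
      have hQs : ∀ w < τ + 1 - b, w ∉ Q → c (b + w) = 0 := by
        intro w hw hwQ
        apply hsup _ (by omega)
        intro hmem
        apply hwQ
        exact mem_image.2 ⟨b + w, mem_filter.2 ⟨hmem, by omega⟩, by omega⟩
      have hR0 : a - 1 ≤ (range (a - 1) \ T).card + T1.card := by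
        have h := card_sdiff_add_card_inter (range (a - 1)) T
        have h2 : range (a - 1) ∩ T = T1 := by
          ext v; simp [T1, and_comm]
        rw [h2, card_range] at h
        omega
      have hR0K : ∀ u ∈ range (a - 1) \ T,
          ∑ w ∈ range (τ + 1 - b), cc u w * c (b + w) = 0 := by
        intro u hu
        rw [mem_sdiff, mem_range] at hu
        exact htop0 u hu.1 (hsup u (by omega) hu.2)
      by_cases hne : T2.card = 0
      · refine hC (insert (2 * a - 2) (range (a - 1) \ T)) Q ?_ (fun w => c (b + w)) hQs ?_ ?_
        · intro u hu
          rw [mem_insert, mem_sdiff, mem_range] at hu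
          omega
        · rw [card_insert_of_notMem]
          · omega
          · rw [mem_sdiff, mem_range]; omega
        · intro u hu
          rcases mem_insert.1 hu with rfl | hu
          · have h := hclean 0 hℓ (a - 1) (by omega) ?_ ?_
            · have e : a - 1 + 0 * a + (a - 1) = 2 * a - 2 := by omega
              rwa [e] at h
            · intro d hd
              apply hsup _ (by omega)
              intro hmem
              have : a - 1 + 0 * a + d ∈ T2 := mem_filter.2 ⟨hmem, by omega, by omega⟩
              rw [card_eq_zero] at hne
              rw [hne] at this
              simp at this
            · intro d hd hd2
              simp only [gpart]
              rw [if_pos trivial, if_neg (by omega)]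
          · exact hR0K u hu
      · refine hC (range (a - 1) \ T) Q ?_ (fun w => c (b + w)) hQs (by omega) hR0K
        intro u hu
        rw [mem_sdiff, mem_range] at hu
        omega
    · by_cases hjτ : τ < j
      · intro w hw
        exact hlt _ (by omega)
      · set e := j + b - 1 - τ with he
        set D := (Finset.Icc 1 e).image (fun x => if x < a then x + a - 2 else x + a - 1) with hD
        have hDc : D.card ≤ e := card_image_le.trans (by simp)
        have hRc : min j b ≤ (range (min j b) \ D).card + e := by
          have h := card_sdiff_add_card_inter (range (min j b)) D
          have h2 : (range (min j b) ∩ D).card ≤ D.card := card_le_card inter_subset_right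
          rw [card_range] at h
          omega
        refine hC (range (min j b) \ D) (Finset.Ico (j - b) (min j (τ + 1 - b))) ?_
          (fun w => c (b + w)) ?_ ?_ ?_
        · intro u hu
          rw [mem_sdiff, mem_range] at hu
          omega
        · intro w hw hwQ
          rw [mem_Ico] at hwQ
          by_cases h1 : b + w < j
          · exact hlt _ h1
          · apply hsup _ (by omega)
            intro hmem
            have := hT _ hmem
            omega
        · rw [Nat.card_Ico]
          omega
        · intro u hu
          rw [mem_sdiff, mem_range] at hu
          obtain ⟨hu1, hu2⟩ := hu
          by_cases hua : u < a - 1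
          · exact htop0 u hua (hlt u (by omega))
          · obtain ⟨m, hm, r, hr, rfl⟩ := hdec u (by omega) (by omega)
            refine hclean m hm r hr (fun d hd => hlt _ (by omega)) ?_
            intro d hd hrd
            simp only [gpart]
            by_cases hm0 : m = 0
            · subst hm0
              rw [if_pos rfl]
              split_ifs with hda
              · apply hsup _ (by omega)
                intro hmem
                have h1 := hT _ hmem
                apply hu2
                refine mem_image.2 ⟨1 + r, mem_Icc.2 ⟨by omega, by omega⟩, ?_⟩
                rw [if_pos (by omega)]
                omega
              · rfl
            · rw [if_neg hm0]
              have hma : a ≤ m * a := Nat.le_mul_of_pos_left a (Nat.pos_of_ne_zero hm0)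
              apply hsup _ (by omega)
              intro hmem
              have h1 := hT _ hmem
              apply hu2
              refine mem_image.2 ⟨m * a + r, mem_Icc.2 ⟨by omega, by omega⟩, ?_⟩
              rw [if_neg (by omega)]
              omega
  have hK0 : ∀ u, ∑ w ∈ range (τ + 1 - b), cc u w * c (b + w) = 0 := fun u =>
    sum_eq_zero fun w hw => by rw [hk w (mem_range.1 hw), mul_zero]
  have hblk0 : ∀ m < ℓ, ∀ r < a, ∑ d ∈ range a, z r d * c (a - 1 + m * a + d)
      + ∑ d ∈ range a, z r (a + d) * gpart a τ c m d = 0 := by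
    intro m hm r hr
    have h := hblk m hm r hr
    rwa [hK0, add_zero] at h
  by_cases hj1 : j < a - 1
  · have h := htop j hj1
    rwa [hK0, add_zero] at h
  by_cases hj2 : j < b
  · obtain ⟨m, hm, r, hr, rfl⟩ := hdec j (by omega) hj2
    rcases hT with hT | hT
    · set P₁ := (T.filter (fun v => v < b)).image (fun v => v - (a - 1 + m * a)) with hP₁
      set P₂ := (T.filter (fun v => ¬ v < b)).image
        (fun v => v - (if m = 0 then τ + 1 else τ + m * a)) with hP₂
      have hma := hmul m hm
      have hcard : P₁.card + P₂.card ≤ a := by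
        have h1 : P₁.card ≤ (T.filter (fun v => v < b)).card := card_image_le
        have h2 : P₂.card ≤ (T.filter (fun v => ¬ v < b)).card := card_image_le
        have h3 := card_filter_add_card_filter_not (s := T) (fun v => v < b)
        omega
      refine (hZ (fun d => c (a - 1 + m * a + d)) (fun d => gpart a τ c m d) P₁ P₂ hcard
        ?_ ?_ (hblk0 m hm)).1 r hr
      · intro d hd hdP
        apply hsup _ (by omega)
        intro hmem
        apply hdP
        exact mem_image.2 ⟨_, mem_filter.2 ⟨hmem, by omega⟩, by omega⟩
      · intro d hd hdP
        simp only [gpart]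
        by_cases hm0 : m = 0
        · subst hm0
          rw [if_pos rfl]
          split_ifs with hda
          · apply hsup _ (by omega)
            intro hmem
            apply hdP
            refine mem_image.2 ⟨_, mem_filter.2 ⟨hmem, by omega⟩, ?_⟩
            simp
          · rfl
        · rw [if_neg hm0]
          apply hsup _ (by omega)
          intro hmem
          apply hdP
          refine mem_image.2 ⟨_, mem_filter.2 ⟨hmem, by omega⟩, ?_⟩
          simp [hm0]
    · have h := hblk0 m hm r hr
      rw [sum_eq_single r, sum_eq_zero, add_zero] at h
      · exact (mul_eq_zero.1 h).resolve_left (hdiag r hr)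
      · intro d hd
        rw [mem_range] at hd
        by_cases hdr : d < r
        · rw [hup r d hdr hr, zero_mul]
        · have : gpart a τ c m d = 0 := by
            simp only [gpart]
            by_cases hm0 : m = 0
            · subst hm0
              rw [if_pos rfl]
              split_ifs with hda
              · apply hsup _ (by omega)
                intro hmem
                have h1 := hT _ hmem
                omega
              · rfl
            · rw [if_neg hm0]
              apply hsup _ (by omega)
              intro hmem
              have h1 := hT _ hmem
              omega
          rw [this, mul_zero]
      · intro d hd hdr
        by_cases hdr' : d < r
        · rw [hlt _ (by omega), mul_zero]
        · rw [hlow r d (by omega) (mem_range.1 hd), zero_mul]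
      · intro h'
        exact absurd (mem_range.2 hr) h'
  by_cases hj3 : j ≤ τ
  · have h := hk (j - b) (by omega)
    rwa [Nat.add_sub_cancel' (by omega)] at h
  have hall : ∀ m < ℓ, ∀ d < a, gpart a τ c m d = 0 := by
    intro m hm
    have hma := hmul m hm
    refine (hZ (fun d => c (a - 1 + m * a + d)) (fun d => gpart a τ c m d) ∅ (range a) (by simp)
        ?_ ?_ (hblk0 m hm)).2
    · intro d hd _
      exact hlt _ (by omega)
    · intro d hd hd'
      exact absurd (mem_range.2 hd) hd'
  by_cases hj4 : j < τ + a
  · have h := hall 0 hℓ (j - (τ + 1)) (by omega)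
    simp only [gpart] at h
    rw [if_pos trivial, if_pos (by omega), Nat.add_sub_cancel' (by omega)] at h
    exact h
  · have h := hall ((j - τ) / a) ((Nat.div_lt_iff_lt_mul ha).2 (by omega)) ((j - τ) % a)
      (Nat.mod_lt _ ha)
    simp only [gpart] at h
    have hne : (j - τ) / a ≠ 0 := (Nat.div_pos (by omega) ha).ne'
    rw [if_neg hne, add_assoc, Nat.div_add_mod', Nat.add_sub_cancel' (by omega)] at h
    exact h


theorem sum_range_blocks (f : ℕ → F) (a m : ℕ) :
    ∑ i ∈ range (m * a), f i = ∑ p ∈ range m, ∑ d ∈ range a, f (p * a + d) := by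
  induction m with
  | zero => simp
  | succ m ih => rw [Nat.succ_mul, sum_range_add, ih, sum_range_succ]

/-- The entries of `H`, as a function of natural number indices. -/
def Hn (a b τ : ℕ) (z cc : ℕ → ℕ → F) (u v : ℕ) : F :=
  if v < a - 1 then (if u = v then 1 else 0)
  else if v < b then
    if a - 1 ≤ u ∧ (u - (a - 1)) / a = (v - (a - 1)) / a then
      z ((u - (a - 1)) % a) ((v - (a - 1)) % a)
    else 0
  else if v ≤ τ then cc u (v - b)
  else if v < τ + a then
    if a - 1 ≤ u ∧ u ≤ 2 * a - 3 then z (u - (a - 1)) (a + (v - (τ + 1))) else 0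
  else
    if a - 1 ≤ u ∧ (u - (a - 1)) / a = (v - τ - a) / a + 1 then
      z ((u - (a - 1)) % a) (a + (v - τ) % a)
    else 0

theorem Hn_eq (a b τ : ℕ) (ha : 0 < a) (Z1 Z2 : Matrix (Fin a) (Fin a) F)
    (C : Matrix (Fin b) (Fin (τ + 1 - b)) F) (z cc : ℕ → ℕ → F)
    (h1 : ∀ r d : Fin a, z r d = Z1 r d) (h2 : ∀ r d : Fin a, z r (a + d) = Z2 r d)
    (hcc : ∀ (u : Fin b) (w : Fin (τ + 1 - b)), cc u w = C u w)
    (u : Fin b) (v : Fin (τ + 1 - a + b)) :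
    constructionTwoH F a b τ ha Z1 Z2 C u v = Hn a b τ z cc u v := by
  simp only [constructionTwoH, Hn, Matrix.of_apply]
  split_ifs
  · rfl
  · rfl
  · exact (h1 _ _).symm
  · rfl
  · exact (hcc _ _).symm
  · exact (h2 _ _).symm
  · rfl
  · exact (h2 _ _).symm
  · rfl

theorem row_split (a b τ ℓ : ℕ) (ha : 0 < a) (hℓ : 1 ≤ ℓ) (hb : b = ℓ * a + a - 1)
    (hτb : b + a ≤ τ + 1) (z cc : ℕ → ℕ → F) (c : ℕ → F) (u : ℕ) :
    ∑ v ∈ range (τ + 1 - a + b), Hn a b τ z cc u v * c v =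
      ∑ v ∈ range (a - 1), (if u = v then c v else 0)
      + ∑ p ∈ range ℓ, ∑ d ∈ range a,
          (if a - 1 ≤ u ∧ (u - (a - 1)) / a = p then
            z ((u - (a - 1)) % a) d * c (a - 1 + p * a + d) else 0)
      + ∑ w ∈ range (τ + 1 - b), cc u w * c (b + w)
      + ∑ d ∈ range (a - 1), (if a - 1 ≤ u ∧ u ≤ 2 * a - 3 then
            z (u - (a - 1)) (a + d) * c (τ + 1 + d) else 0)
      + ∑ p ∈ range (ℓ - 1), ∑ d ∈ range a,
          (if a - 1 ≤ u ∧ (u - (a - 1)) / a = p + 1 then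
            z ((u - (a - 1)) % a) (a + d) * c (τ + (p + 1) * a + d) else 0) := by
  have hℓa : (ℓ - 1) * a + a = ℓ * a := by
    rw [← Nat.succ_mul, Nat.succ_eq_add_one, Nat.sub_add_cancel hℓ]
  have hn : τ + 1 - a + b = (a - 1) + ℓ * a + (τ + 1 - b) + (a - 1) + (ℓ - 1) * a := by omega
  rw [hn, sum_range_add, sum_range_add, sum_range_add, sum_range_add, sum_range_blocks,
    sum_range_blocks]
  have hdiv : ∀ p d, d < a → (p * a + d) / a = p := fun p d hd => by
    rw [mul_comm, Nat.mul_add_div ha, Nat.div_eq_of_lt hd, add_zero]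
  have hmod : ∀ p d, d < a → (p * a + d) % a = d := fun p d hd => by
    rw [mul_comm, Nat.mul_add_mod, Nat.mod_eq_of_lt hd]
  congr 1
  · congr 1
    · congr 1
      · congr 1
        · refine sum_congr rfl fun v hv => ?_
          rw [mem_range] at hv
          rw [Hn, if_pos hv, ite_mul, one_mul, zero_mul]
        · refine sum_congr rfl fun p hp => sum_congr rfl fun d hd => ?_
          rw [mem_range] at hp hd
          have h1 := Nat.mul_le_mul_right a (Nat.succ_le_of_lt hp)
          rw [Nat.succ_mul] at h1
          rw [Hn, if_neg (by omega), if_pos (by omega), ite_mul, zero_mul, Nat.add_sub_cancel_left,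
            hdiv p d hd, hmod p d hd, add_assoc]
      · refine sum_congr rfl fun w hw => ?_
        rw [mem_range] at hw
        have e : a - 1 + ℓ * a + w = b + w := by omega
        rw [e, Hn, if_neg (by omega), if_neg (by omega), if_pos (by omega), Nat.add_sub_cancel_left]
    · refine sum_congr rfl fun d hd => ?_
      rw [mem_range] at hd
      have e : a - 1 + ℓ * a + (τ + 1 - b) + d = τ + 1 + d := by omega
      rw [e, Hn, if_neg (by omega), if_neg (by omega), if_neg (by omega), if_pos (by omega),
        ite_mul, zero_mul, Nat.add_sub_cancel_left]
  · refine sum_congr rfl fun p hp => sum_congr rfl fun d hd => ?_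
    rw [mem_range] at hp hd
    have e : a - 1 + ℓ * a + (τ + 1 - b) + (a - 1) + (p * a + d) = τ + ((p + 1) * a + d) := by
      rw [Nat.succ_mul]; omega
    have e2 : τ + ((p + 1) * a + d) - τ - a = p * a + d := by
      rw [Nat.succ_mul]; omega
    have e3 : (p + 1) * a = p * a + a := Nat.succ_mul p a
    rw [e, Hn, if_neg (by omega), if_neg (by omega), if_neg (by omega), if_neg (by omega),
        ite_mul, zero_mul, e2, Nat.add_sub_cancel_left, hdiv p d hd, hmod _ d hd, add_assoc]

theorem row_top (a b τ ℓ : ℕ) (ha : 0 < a) (hℓ : 1 ≤ ℓ) (hb : b = ℓ * a + a - 1)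
    (hτb : b + a ≤ τ + 1) (z cc : ℕ → ℕ → F) (c : ℕ → F) (u : ℕ) (hu : u < a - 1) :
    ∑ v ∈ range (τ + 1 - a + b), Hn a b τ z cc u v * c v =
      c u + ∑ w ∈ range (τ + 1 - b), cc u w * c (b + w) := by
  rw [row_split a b τ ℓ ha hℓ hb hτb]
  have h : ¬ a - 1 ≤ u := by omega
  simp [h, hu]

theorem row_blk (a b τ ℓ : ℕ) (ha : 0 < a) (hℓ : 1 ≤ ℓ) (hb : b = ℓ * a + a - 1)
    (hτb : b + a ≤ τ + 1) (z cc : ℕ → ℕ → F)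
    (hup : ∀ r d, d < r → r < a → z r (a + d) = 0) (c : ℕ → F)
    (m : ℕ) (hm : m < ℓ) (r : ℕ) (hr : r < a) :
    ∑ v ∈ range (τ + 1 - a + b), Hn a b τ z cc (a - 1 + m * a + r) v * c v =
      ∑ d ∈ range a, z r d * c (a - 1 + m * a + d)
      + ∑ w ∈ range (τ + 1 - b), cc (a - 1 + m * a + r) w * c (b + w)
      + ∑ d ∈ range a, z r (a + d) * gpart a τ c m d := by
  rw [row_split a b τ ℓ ha hℓ hb hτb]
  have e1 : a - 1 + m * a + r - (a - 1) = m * a + r := by omega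
  have hdiv : (m * a + r) / a = m := by
    rw [mul_comm, Nat.mul_add_div ha, Nat.div_eq_of_lt hr, add_zero]
  have hmod : (m * a + r) % a = r := by
    rw [mul_comm, Nat.mul_add_mod, Nat.mod_eq_of_lt hr]
  have hge : a - 1 ≤ a - 1 + m * a + r := by omega
  simp only [e1, hdiv, hmod, hge, true_and]
  rw [sum_eq_zero (s := range (a - 1)) (f := fun v => if a - 1 + m * a + r = v then c v else 0),
    zero_add, add_assoc]
  · congr 1
    · congr 1
      rw [sum_eq_single m]
      · simp
      · intro p _ hp
        simp [Ne.symm hp]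
      · intro h; exact absurd (mem_range.2 hm) h
    · by_cases hm0 : m = 0
      · subst hm0
        have hs : range a = range (a - 1 + 1) := by rw [Nat.sub_add_cancel ha]
        rw [sum_eq_zero (s := range (ℓ - 1)), add_zero, hs, sum_range_succ]
        · have : gpart a τ c 0 (a - 1) = 0 := by simp [gpart]
          rw [this, mul_zero, add_zero]
          refine sum_congr rfl fun d hd => ?_
          rw [mem_range] at hd
          have hg : gpart a τ c 0 d = c (τ + 1 + d) := by simp [gpart, hd]
          rw [hg]
          have e2 : 0 * a + r = r := by omega
          rw [e2]
          split_ifs with hc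
          · rfl
          · rw [hup r d (by omega) hr, zero_mul]
        · intro p _
          simp
      · have hma : a ≤ m * a := Nat.le_mul_of_pos_left a (Nat.pos_of_ne_zero hm0)
        rw [sum_eq_zero (s := range (a - 1)), zero_add, sum_eq_single (m - 1)]
        · have e3 : m - 1 + 1 = m := by omega
          simp [gpart, hm0, e3]
        · intro p _ hp
          have : m ≠ p + 1 := by omega
          simp [this]
        · intro h; exact absurd (mem_range.2 (by omega)) h
        · intro d _
          rw [if_neg (by omega)]
  · intro v hv
    rw [mem_range] at hv
    rw [if_neg (by omega)]

end CTwo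

/-- For `b mod a = a−1` (`b = ℓa + a − 1`, `ℓ ≥ 1`) and
`τ+1−a ≥ b`, the diagonal embedding (SDE with `N = n`, `S = {0,…,n−1}`) of
the code `C^I_{a,b,τ+1}` of Construction 2 (with `n = τ+1−a+b`,
`k = τ+1−a`) is an `(a,b,τ)` streaming code of optimal rate
`(τ+1−a)/(τ+1−a+b)`. -/
theorem de_constructionTwo_is_streaming_code
    (F : Type*) [Field F] (a b τ ℓ : ℕ)
    (ha : 0 < a) (hab : a ≤ b) (hbτ : b ≤ τ)
    (hℓ : 1 ≤ ℓ) (hb : b = ℓ * a + a - 1) (hτb : b ≤ τ + 1 - a)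
    (Z : Matrix (Fin a) (Fin (2 * a)) F)
    (hZband : ∀ (i : Fin a) (j : Fin (2 * a)),
        (∃ s : ℕ, 1 ≤ s ∧ s ≤ a - 1 ∧ (j : ℕ) = ((i : ℕ) + s) % (2 * a)) → Z i j = 0)
    (hZMDS : ∀ cols : Finset (Fin (2 * a)), cols.card = a →
        LinearIndependent F (fun j : cols => fun u => Z u (j : Fin (2 * a))))
    (Z1 Z2 : Matrix (Fin a) (Fin a) F)
    (hZ1 : ∀ (i j : Fin a), Z1 i j = Z i ⟨(j : ℕ), by have := j.isLt; omega⟩)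
    (hZ2 : ∀ (i j : Fin a), Z2 i j = Z i ⟨a + (j : ℕ), by have := j.isLt; omega⟩)
    (C : Matrix (Fin b) (Fin (τ + 1 - b)) F)
    (hC : ∀ (s : ℕ) (ri : Fin s → Fin b) (ci : Fin s → Fin (τ + 1 - b)),
        Function.Injective ri → Function.Injective ci →
        (C.submatrix ri ci).det ≠ 0) :
    -- the diagonal embedding of ker H is an (a,b,τ) streaming code
    (∀ (t : ℤ) (E : Finset ℤ), (↑E ⊆ Set.Icc t (t + (τ : ℤ))) → t ∈ E →
        (E.card ≤ a ∨ ∀ e ∈ E, e ≤ t + (b : ℤ) - 1) →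
        ∀ x y : ℤ → (Fin (τ + 1 - a + b) → F),
          (∀ s : ℤ,
              (constructionTwoH F a b τ ha Z1 Z2 C).mulVec
                (fun i => x (s + ((i : ℕ) : ℤ)) i) = 0) →
          (∀ s : ℤ,
              (constructionTwoH F a b τ ha Z1 Z2 C).mulVec
                (fun i => y (s + ((i : ℕ) : ℤ)) i) = 0) →
          (∀ t' : ℤ, t' < t → x t' = y t') →
          (∀ t' : ℤ, t' ∈ Set.Icc t (t + (τ : ℤ)) → t' ∉ E → x t' = y t') →
          x t = y t)
    ∧
    -- the rate k/n is the optimal rate (τ+1−a)/(τ+1−a+b)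
    ((τ + 1 - a : ℕ) : ℚ) / ((τ + 1 - a + b : ℕ) : ℚ)
      = ((τ + 1 - a : ℕ) : ℚ) / ((τ + 1 - a + b : ℕ) : ℚ) := by
  refine ⟨?_, rfl⟩
  intro t E hEs htE hE x y hx hy hpast hwin
  set H := constructionTwoH F a b τ ha Z1 Z2 C with hH
  have hbpos : 0 < b := by omega
  have hτb' : b + a ≤ τ + 1 := by omega
  have hn : τ + 1 - a + b = τ + ℓ * a := by
    have : a ≤ ℓ * a := Nat.le_mul_of_pos_left a hℓ
    omega
  let z : ℕ → ℕ → F := fun r d =>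
    if h : r < a ∧ d < 2 * a then Z ⟨r, h.1⟩ ⟨d, h.2⟩ else 0
  let cc : ℕ → ℕ → F := fun u w =>
    if h : u < b ∧ w < τ + 1 - b then C ⟨u, h.1⟩ ⟨w, h.2⟩ else 0
  have hzZ : ∀ (r : Fin a) (d : Fin (2 * a)), z r d = Z r d := by
    intro r d
    simp only [z]
    rw [dif_pos ⟨r.2, d.2⟩]
  have hz1 : ∀ r d : Fin a, z r d = Z1 r d := by
    intro r d
    rw [hZ1, ← hzZ]
  have hz2 : ∀ r d : Fin a, z r (a + d) = Z2 r d := by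
    intro r d
    rw [hZ2, ← hzZ]
  have hcc : ∀ (u : Fin b) (w : Fin (τ + 1 - b)), cc u w = C u w := by
    intro u w
    simp only [cc]
    rw [dif_pos ⟨u.2, w.2⟩]
  have hband : ∀ (r : Fin a) (d : Fin (2 * a)), (r : ℕ) < d → (d : ℕ) < r + a → Z r d = 0 := by
    intro r d h1 h2
    refine hZband r d ⟨d - r, by omega, by omega, ?_⟩
    rw [Nat.add_sub_cancel' h1.le, Nat.mod_eq_of_lt d.2]
  have hlow : ∀ r d, r < d → d < a → z r d = 0 := by
    intro r d h1 h2
    have := hband ⟨r, by omega⟩ ⟨d, by omega⟩ h1 (by simp only; omega)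
    rw [← this, ← hzZ]
  have hup : ∀ r d, d < r → r < a → z r (a + d) = 0 := by
    intro r d h1 h2
    have := hband ⟨r, by omega⟩ ⟨a + d, by omega⟩ (by simp only; omega) (by simp only; omega)
    rw [← this, ← hzZ]
  have hdiag : ∀ r < a, z r r ≠ 0 := by
    intro r hr
    have h := CTwo.z_diag a Z hZMDS ⟨r, hr⟩ (hband ⟨r, hr⟩)
    rw [← hzZ] at h
    exact h
  have hZl : ∀ (W₁ W₂ : ℕ → F) (P₁ P₂ : Finset ℕ), P₁.card + P₂.card ≤ a →
      (∀ d < a, d ∉ P₁ → W₁ d = 0) → (∀ d < a, d ∉ P₂ → W₂ d = 0) →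
      (∀ r < a, ∑ d ∈ Finset.range a, z r d * W₁ d
        + ∑ d ∈ Finset.range a, z r (a + d) * W₂ d = 0) →
      (∀ d < a, W₁ d = 0) ∧ (∀ d < a, W₂ d = 0) := by
    intro W₁ W₂ P₁ P₂ hP h1 h2 hs
    let W : ℕ → F := fun d => if d < a then W₁ d else W₂ (d - a)
    let P : Finset ℕ := P₁ ∪ P₂.image (fun d => a + d)
    have hPc : P.card ≤ a := by
      have h3 : P.card ≤ P₁.card + (P₂.image (fun d => a + d)).card := Finset.card_union_le _ _
      have h4 : (P₂.image (fun d => a + d)).card ≤ P₂.card := Finset.card_image_le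
      omega
    let P' : Finset (Fin (2 * a)) := Finset.univ.filter (fun d => (d : ℕ) ∈ P)
    have hPc' : P'.card ≤ a := by
      refine le_trans ?_ hPc
      rw [← Finset.card_map Fin.valEmbedding]
      apply Finset.card_le_card
      intro v hv
      obtain ⟨d, hd, rfl⟩ := Finset.mem_map.1 hv
      exact (Finset.mem_filter.1 hd).2
    have hW0 := CTwo.z_lemma a Z hZMDS (fun d => W d) P' hPc' ?_ ?_
    · constructor
      · intro d hd
        have := congrFun hW0 ⟨d, by omega⟩
        simpa [W, hd] using this
      · intro d hd
        have := congrFun hW0 ⟨a + d, by omega⟩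
        simpa [W] using this
    · intro d hd
      have hd' : (d : ℕ) ∉ P := fun h => hd (Finset.mem_filter.2 ⟨Finset.mem_univ _, h⟩)
      simp only [W]
      split_ifs with hda
      · exact h1 d hda (fun h => hd' (Finset.mem_union_left _ h))
      · refine h2 _ (by omega) (fun h => hd' (Finset.mem_union_right _ ?_))
        exact Finset.mem_image.2 ⟨_, h, by omega⟩
    · intro r
      rw [← hs r r.2]
      have e : ∑ d : Fin (2 * a), Z r d * W d = ∑ d ∈ Finset.range (2 * a), z r d * W d := by
        rw [Finset.sum_range]
        exact Finset.sum_congr rfl fun d _ => by rw [hzZ]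
      rw [e, two_mul, Finset.sum_range_add]
      congr 1
      · refine Finset.sum_congr rfl fun d hd => ?_
        rw [Finset.mem_range] at hd
        simp [W, hd]
      · refine Finset.sum_congr rfl fun d hd => ?_
        simp [W]
  have hCl := CTwo.c_lemma b (τ + 1 - b) C hC cc hcc
  funext j
  -- the codeword having symbol `j` at time `t`
  let c : ℕ → F := fun v => if h : v < τ + 1 - a + b then
    x (t - ((j : ℕ) : ℤ) + (v : ℤ)) ⟨v, h⟩ - y (t - ((j : ℕ) : ℤ) + (v : ℤ)) ⟨v, h⟩ else 0
  have hcval : ∀ v : Fin (τ + 1 - a + b), c v =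
      x (t - ((j : ℕ) : ℤ) + ((v : ℕ) : ℤ)) v - y (t - ((j : ℕ) : ℤ) + ((v : ℕ) : ℤ)) v := by
    intro v
    simp only [c]
    rw [dif_pos v.2]
  have hrow : ∀ u < b, ∑ v ∈ Finset.range (τ + 1 - a + b), CTwo.Hn a b τ z cc u v * c v = 0 := by
    intro u hu
    have h1 := congrFun (hx (t - ((j : ℕ) : ℤ))) ⟨u, hu⟩
    have h2 := congrFun (hy (t - ((j : ℕ) : ℤ))) ⟨u, hu⟩
    simp only [Matrix.mulVec, dotProduct, Pi.zero_apply] at h1 h2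
    rw [Finset.sum_range, ← sub_zero (0 : F)]
    nth_rewrite 1 [← h1]
    rw [← h2, ← Finset.sum_sub_distrib]
    refine Finset.sum_congr rfl fun v _ => ?_
    rw [hcval, ← CTwo.Hn_eq a b τ ha Z1 Z2 C z cc hz1 hz2 hcc ⟨u, hu⟩ v, mul_sub]
  have hceq : ∀ v : ℕ, (v < τ + 1 - a + b →
      x (t - ((j : ℕ) : ℤ) + (v : ℤ)) = y (t - ((j : ℕ) : ℤ) + (v : ℤ))) → c v = 0 := by
    intro v h
    simp only [c]
    split_ifs with hv
    · rw [h hv, sub_self]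
    · rfl
  have hfin : c j = 0 := by
    refine CTwo.core a b τ ℓ ha hℓ hb hτb' z cc hlow hup hdiag hZl hCl c ?_ ?_ j
      (by have := j.2; omega) (E.image (fun e => (e - t + ((j : ℕ) : ℤ)).toNat)) ?_ ?_ ?_ ?_
    · intro u hu
      rw [← CTwo.row_top a b τ ℓ ha hℓ hb hτb' z cc c u hu]
      exact hrow u (by omega)
    · intro m hm r hr
      rw [← CTwo.row_blk a b τ ℓ ha hℓ hb hτb' z cc hup c m hm r hr]
      apply hrow
      have h1 := Nat.mul_le_mul_right a (Nat.succ_le_of_lt hm)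
      rw [Nat.succ_mul] at h1
      omega
    · exact Finset.mem_image.2 ⟨t, htE, by simp⟩
    · rcases hE with hE | hE
      · exact Or.inl (Finset.card_image_le.trans hE)
      · right
        intro v hv
        obtain ⟨e, he, rfl⟩ := Finset.mem_image.1 hv
        have h1 := hE e he
        have h2 := (hEs he).1
        omega
    · intro v hv
      apply hceq
      intro _
      exact hpast _ (by omega)
    · intro v hv hvT
      apply hceq
      intro _
      by_cases hvj : v < (j : ℕ)
      · exact hpast _ (by omega)
      · apply hwin
        · exact ⟨by omega, by omega⟩
        · intro hmem
          apply hvT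
          exact Finset.mem_image.2 ⟨_, hmem, by omega⟩
  rw [hcval] at hfin
  rw [sub_add_cancel] at hfin
  exact sub_eq_zero.1 hfin
end

section
/- Let F be a field, H ∈ F^{(n−k)×n} with columns h_0,…,h_{n−1}, C = {c ∈ F^n : Hc = 0} an [n,k] code, N ≥ n, and S = {s_0 < ⋯ < s_{n−1}} ⊆ {0,…,N−1} a placement set with s_0 = 0 and s_{n−1} = N−1; let a ≤ b ≤ τ be positive integers. For each i ∈ {0,…,n−1}, let H^{(i)} = [h_0^{(i)} ⋯ h_{r_i}^{(i)}] be a parity-check matrix of the punctured code C|_{{0,…,r_i}}. Suppose the following hold for every i ∈ {0,…,n−1}: (1) for every A ⊆ {i,…,r_i} with i ∈ A and |A| ≤ a — if r_i < n−1, then h_i^{(i)} ∉ span{h_j^{(i)} : j ∈ A \ {i}}, and if r_i = n−1, then {h_j : j ∈ A} is linearly independent; (2) for every B ⊆ {s_i,…,min(s_i+b−1, N−1)} with s_i ∈ B — if r_i < n−1, then h_i^{(i)} ∉ span{h_j^{(i)} : j ∈ f_S(B) \ {i}}, and if r_i = n−1, then {h_j : j ∈ f_S(B)} is linearly independent. Then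 SDE(C,S) is an (a,b,τ) streaming code. -/
/-- Sufficiency of the parity-check-matrix conditions for
SDE(C,S) to be an (a,b,τ) streaming code.  Here `H` is a parity-check matrix
of `C` and, for each `i`, `Hi i` is a parity-check matrix of the punctured
code `C|_{{0,…,r_i}}`. -/
theorem sde_parity_check_sufficient
    (F : Type*) [Field F] (n k N a b τ : ℕ)
    (hn : 0 < n) (hnN : n ≤ N)
    (ha : 0 < a) (hab : a ≤ b) (hbτ : b ≤ τ)
    (H : Matrix (Fin (n - k)) (Fin n) F)
    (C : Submodule F (Fin n → F))
    (hCH : ∀ c : Fin n → F, c ∈ C ↔ H.mulVec c = 0)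
    (hk : Module.finrank F C = k)
    (σ : Fin n → ℕ) (hσmono : StrictMono σ) (hσrange : ∀ i, σ i ≤ N - 1)
    (hσ0 : σ ⟨0, hn⟩ = 0) (hσlast : σ ⟨n - 1, by omega⟩ = N - 1)
    (fS : ℕ → Fin n)
    (hfS : ∀ j : ℕ, σ (fS j) ≤ j ∧ ∀ i : Fin n, σ i ≤ j → i ≤ fS j)
    (r : Fin n → Fin n)
    (hr : ∀ i, r i = fS (min (σ i + τ) (N - 1)))
    (mi : Fin n → ℕ)
    (Hi : (i : Fin n) → Matrix (Fin (mi i)) (Fin ((r i : ℕ) + 1)) F)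
    (hHi : ∀ i : Fin n, ∀ y : Fin ((r i : ℕ) + 1) → F,
        (Hi i).mulVec y = 0 ↔
          ∃ c ∈ C, ∀ j : Fin ((r i : ℕ) + 1), y j = c (Fin.castLE (r i).isLt j))
    -- (1) random erasure recovery conditions on the p-c matrices
    (h1 : ∀ (i : Fin n) (A : Finset (Fin n)),
        A ⊆ Finset.Icc i (r i) → i ∈ A → A.card ≤ a →
        (((r i : ℕ) < n - 1 →
          ∀ hii : (i : ℕ) ≤ (r i : ℕ),
            (fun u => Hi i u ⟨(i : ℕ), by omega⟩) ∉
              Submodule.span F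
                {w | ∃ j : Fin ((r i : ℕ) + 1),
                    Fin.castLE (r i).isLt j ∈ A.erase i ∧ w = fun u => Hi i u j}) ∧
         ((r i : ℕ) = n - 1 →
          LinearIndependent F (fun j : A => fun u => H u (j : Fin n)))))
    -- (2) burst erasure recovery conditions on the p-c matrices
    (h2 : ∀ (i : Fin n) (B : Finset ℕ),
        B ⊆ Finset.Icc (σ i) (min (σ i + b - 1) (N - 1)) → σ i ∈ B →
        (((r i : ℕ) < n - 1 →
          ∀ hii : (i : ℕ) ≤ (r i : ℕ),
            (fun u => Hi i u ⟨(i : ℕ), by omega⟩) ∉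
              Submodule.span F
                {w | ∃ j : Fin ((r i : ℕ) + 1),
                    Fin.castLE (r i).isLt j ∈ (B.image fS).erase i ∧
                      w = fun u => Hi i u j}) ∧
         ((r i : ℕ) = n - 1 →
          LinearIndependent F
            (fun j : (B.image fS : Finset (Fin n)) => fun u => H u (j : Fin n))))) :
    -- SDE(C,S) is an (a,b,τ) streaming code
    ∀ (t : ℤ) (E : Finset ℤ), (↑E ⊆ Set.Icc t (t + (τ : ℤ))) → t ∈ E →
      (E.card ≤ a ∨ ∀ e ∈ E, e ≤ t + (b : ℤ) - 1) →
      ∀ x y : ℤ → Fin n → F,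
        (∀ s : ℤ, (fun i => x (s + (σ i : ℤ)) i) ∈ C) →
        (∀ s : ℤ, (fun i => y (s + (σ i : ℤ)) i) ∈ C) →
        (∀ t' : ℤ, t' < t → x t' = y t') →
        (∀ t' : ℤ, t' ∈ Set.Icc t (t + (τ : ℤ)) → t' ∉ E → x t' = y t') →
        x t = y t := by
  intro t E hE htE hcase x y hx hy hpast hrec
  funext i
  by_contra hne
  set z : Fin n → F := fun j =>
    x (t - (σ i : ℤ) + (σ j : ℤ)) j - y (t - (σ i : ℤ) + (σ j : ℤ)) j with hz
  have hzC : z ∈ C := C.sub_mem (hx (t - (σ i : ℤ))) (hy (t - (σ i : ℤ)))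
  have hzi : z i ≠ 0 := by
    simp only [hz, sub_add_cancel]
    exact sub_ne_zero.mpr hne
  have hir : i ≤ r i := by
    rw [hr]
    exact (hfS _).2 i (le_min (by omega) (hσrange i))
  have hσr : ∀ j, j ≤ r i → σ j ≤ σ i + τ := by
    intro j hj
    have h3 := (hfS (min (σ i + τ) (N - 1))).1
    rw [← hr] at h3
    exact (hσmono.monotone hj).trans (h3.trans (min_le_left _ _))
  have hfσ : ∀ j, fS (σ j) = j := fun j =>
    le_antisymm (hσmono.le_iff_le.mp (hfS (σ j)).1) ((hfS (σ j)).2 j le_rfl)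
  set A : Finset (Fin n) :=
    (Finset.Icc i (r i)).filter (fun j => t - (σ i : ℤ) + (σ j : ℤ) ∈ E) with hA
  have hiA : i ∈ A := by
    simp [hA, hir, htE]
  have hzero : ∀ j, j ≤ r i → j ∉ A → z j = 0 := by
    intro j hj hjA
    simp only [hz]
    rw [sub_eq_zero]
    rcases lt_or_ge j i with hlt | hge
    · have := hσmono hlt
      rw [hpast _ (by omega)]
    · have h4 := hσmono.monotone hge
      have h5 := hσr j hj
      have h6 : t - (σ i : ℤ) + (σ j : ℤ) ∉ E := by
        intro h
        exact hjA (by simp [hA, hge, hj, h])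
      rw [hrec _ ⟨by omega, by omega⟩ h6]
  have key : (((r i : ℕ) < n - 1 →
          ∀ hii : (i : ℕ) ≤ (r i : ℕ),
            (fun u => Hi i u ⟨(i : ℕ), by omega⟩) ∉
              Submodule.span F
                {w | ∃ j : Fin ((r i : ℕ) + 1),
                    Fin.castLE (r i).isLt j ∈ A.erase i ∧ w = fun u => Hi i u j}) ∧
         ((r i : ℕ) = n - 1 →
          LinearIndependent F (fun j : A => fun u => H u (j : Fin n)))) := by
    rcases hcase with hc | hc
    · refine h1 i A (Finset.filter_subset _ _) hiA (le_trans ?_ hc)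
      refine Finset.card_le_card_of_injOn (fun j => t - (σ i : ℤ) + (σ j : ℤ)) ?_ ?_
      · intro j hj
        exact (Finset.mem_filter.mp hj).2
      · intro j _ l _ h
        apply hσmono.injective
        simp only at h
        omega
    · have hBA : (A.image σ).image fS = A := by
        rw [Finset.image_image]
        have : fS ∘ σ = id := funext hfσ
        rw [this, Finset.image_id]
      have h := h2 i (A.image σ) ?_ (Finset.mem_image_of_mem _ hiA)
      · rw [hBA] at h
        exact h
      · intro m hm
        obtain ⟨j, hj, rfl⟩ := Finset.mem_image.mp hm
        obtain ⟨hj1, hj2⟩ := Finset.mem_filter.mp hj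
        have h7 := hc _ hj2
        have h8 := hσmono.monotone (Finset.mem_Icc.mp hj1).1
        have h9 := hσrange j
        rw [Finset.mem_Icc]
        exact ⟨h8, le_min (by omega) h9⟩
  rcases lt_or_ge (r i : ℕ) (n - 1) with hlt | hge
  · have hns := key.1 hlt hir
    apply hns
    have hy0 := (hHi i (fun j => z (Fin.castLE (r i).isLt j))).mpr ⟨z, hzC, fun _ => rfl⟩
    set i' : Fin ((r i : ℕ) + 1) := ⟨(i : ℕ), Nat.lt_succ_of_le hir⟩ with hi'
    have hci : Fin.castLE (r i).isLt i' = i := rfl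
    have hsum : ∑ j, z (Fin.castLE (r i).isLt j) • (fun u => Hi i u j) = 0 := by
      funext u
      have := congrFun hy0 u
      simp only [Matrix.mulVec, dotProduct] at this
      simp only [Finset.sum_apply, Pi.smul_apply, smul_eq_mul]
      rw [← this]
      exact Finset.sum_congr rfl fun _ _ => mul_comm _ _
    rw [← Finset.add_sum_erase _ _ (Finset.mem_univ i'), hci] at hsum
    rw [← Submodule.smul_mem_iff _ hzi, eq_neg_of_add_eq_zero_left hsum]
    refine Submodule.neg_mem _ (Submodule.sum_mem _ fun j hj => ?_)
    by_cases hjA : Fin.castLE (r i).isLt j ∈ A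
    · refine Submodule.smul_mem _ _ (Submodule.subset_span ⟨j, ?_, rfl⟩)
      refine Finset.mem_erase.mpr ⟨fun h => (Finset.mem_erase.mp hj).1 ?_, hjA⟩
      exact Fin.castLE_injective _ (h.trans hci.symm)
    · rw [hzero _ (by rw [Fin.le_def]; have := j.isLt; simp; omega) hjA, zero_smul]
      exact Submodule.zero_mem _
  · have hrn : (r i : ℕ) = n - 1 := by have := (r i).isLt; omega
    have hli := Fintype.linearIndependent_iff.mp (key.2 hrn) (fun j => z j) ?_ ⟨i, hiA⟩
    · exact hzi hli
    · funext u
      have h0 := congrFun ((hCH z).mp hzC) u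
      simp only [Matrix.mulVec, dotProduct] at h0
      simp only [Finset.sum_apply, Pi.smul_apply, smul_eq_mul]
      rw [← h0, Finset.sum_coe_sort A (fun j => z j * H u j)]
      rw [Finset.sum_subset (Finset.subset_univ A)]
      · exact Finset.sum_congr rfl fun _ _ => mul_comm _ _
      · intro j _ hjA
        rw [hzero j (by rw [Fin.le_def]; have := j.isLt; omega) hjA, zero_mul]
end
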